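/- Let X = A_m with m ≥ 2 and let ν = (…, a, b, …) be a dominant weight for X whose j-th coefficient is a ≥ 1 and whose (j+1)-st coefficient is b ≥ 2 (for some 1 ≤ j ≤ m−1). Set ε = 3ν − α_j − 2α_{j+1}, where α_1,…,α_m are the simple roots (so ε has j-th coefficient 3a and (j+1)-st coefficient 3b−3). Then: (i) the irreducible module V_X(ε) occurs with multiplicity at least 2 in Λ^3(V_X(ν)); (ii) the multiplicity of V_X(ε) in Λ^2(V_X(ν)) ⊗ V_X(ν) exceeds its multiplicity in Λ^3(V_X(ν)) by at least 2 (i.e. the complement of Λ^3(V_X(ν)) inside Λ^2(V_X(ν)) ⊗ V_X(ν) also contains V_X(ε) with multiplicity at least 2); (iii) S(ε) ≥ S(ν) + 2a + 2b − 3, where S(μ) denotes the sum of the coefficients of a dominant weight μ with respect to the fundamental dominant weights. -/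

import Mathlib

/-!
# Common framework

Over an algebraically closed field of characteristic zero, finite–dimensional rational
representations of a simple algebraic group are semisimple and are determined by their
formal characters, i.e. by elements of the group ring of the (rational) weight lattice;
the character of the irreducible module of highest weight `λ` is pinned down by the
Weyl character formula `A_ρ · χ_λ = A_{λ+ρ}`.

Below we model, completely combinatorially:

* type `A_r` : weights are realised by their traceless representatives in `Fin (r+1) → ℚ`
  (the `gl`-coordinates), and the Weyl group is the symmetric group;
* types `B_n, C_n, D_n` : weights are realised in the standard `ε`-coordinates
  `Fin n → ℚ`, and the Weyl group consists of (signed) permutations, with evenly many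
  sign changes in type `D`;
* an embedding `X = A_r < Y` (classical of type `t` and rank `n`) in which `X` acts on
  the natural module `W` of `Y` irreducibly with highest weight `δ` : the weights of `W`
  are `± w i` (plus one zero weight in type `B`), and restriction of characters is induced
  by the map `v ↦ ∑ i, v i • w i` of weight lattices;
* `IsMFRes t n r δ lam` : the restriction to `X` of the irreducible `Y`-module with
  highest weight `lam` is multiplicity-free, i.e. its character is a sum of distinct
  irreducible characters of `X`.

Dominant weights are always recorded by their (natural number) coordinates in the basis
of fundamental weights, `e n k` being the `k`-th fundamental weight (1-indexed).
-/

noncomputable section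

namespace MFPaper

/-- The Dynkin type of a classical group `B_n = SO_{2n+1}`, `C_n = Sp_{2n}`, `D_n = SO_{2n}`. -/
inductive CType | B | C | D
deriving DecidableEq

/-- The character ring: the integral group ring of a rational weight space
with `k` coordinates. -/
abbrev CharRing (k : ℕ) : Type := AddMonoidAlgebra ℤ (Fin k → ℚ)

/-- The formal exponential `e^v` of a weight `v`. -/
def mono {k : ℕ} (v : Fin k → ℚ) : CharRing k := AddMonoidAlgebra.single v 1

/-- `e n k` : the `k`-th fundamental dominant weight (`1 ≤ k ≤ n`, 1-indexed) of a rank `n`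
group, recorded by its coordinates in the basis of fundamental weights. -/
def e (n k : ℕ) : Fin n → ℕ := fun i => if (i : ℕ) + 1 = k then 1 else 0

/-! ### Type `A_r` -/

/-- The partition (`gl`) lift of the dominant weight of `A_r` with coordinates `d`
in the basis of fundamental weights. -/
def partLift (r : ℕ) (d : Fin r → ℕ) : Fin (r + 1) → ℚ := fun i =>
  ∑ j ∈ Finset.univ.filter (fun j : Fin r => (i : ℕ) ≤ (j : ℕ)), (d j : ℚ)

/-- The traceless (`sl`) representative of the dominant weight of `A_r` with coordinates `d`. -/
def slWt (r : ℕ) (d : Fin r → ℕ) : Fin (r + 1) → ℚ := fun i =>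
  partLift r d i - (∑ j : Fin r, (((j : ℕ) : ℚ) + 1) * (d j : ℚ)) / (r + 1)

/-- A lift of the half-sum of the positive roots of `A_r`. -/
def rhoA (r : ℕ) : Fin (r + 1) → ℚ := fun i => (r : ℚ) - (i : ℕ)

/-- The Weyl alternating sum `A_v = ∑_{σ} sgn(σ) e^{σ v}` for type `A_r`. -/
def altA (r : ℕ) (v : Fin (r + 1) → ℚ) : CharRing (r + 1) :=
  ∑ σ : Equiv.Perm (Fin (r + 1)),
    ((Equiv.Perm.sign σ : ℤˣ) : ℤ) • mono (fun i => v (σ i))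

/-- `IsCharA r d f` : `f` is the formal character of the irreducible `A_r`-module
of highest weight `d` (Weyl character formula). -/
def IsCharA (r : ℕ) (d : Fin r → ℕ) (f : CharRing (r + 1)) : Prop :=
  altA r (rhoA r) * f = altA r (slWt r d + rhoA r)

/-- `Decomp r F c` : the character `F` of a representation of `A_r` decomposes as
`∑_μ (c μ) · χ_μ`, i.e. the irreducible of highest weight `μ` occurs in it as a
composition factor with multiplicity `c μ`. -/
def Decomp (r : ℕ) (F : CharRing (r + 1)) (c : (Fin r → ℕ) →₀ ℕ) : Prop :=
  F * altA r (rhoA r) = c.sum fun μ k => (k : ℤ) • altA r (slWt r μ + rhoA r)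

/-- The Weyl dimension formula for type `A_r`. -/
def dimA (r : ℕ) (d : Fin r → ℕ) : ℚ :=
  ∏ p ∈ Finset.univ.filter (fun p : Fin (r + 1) × Fin (r + 1) => (p.1 : ℕ) < (p.2 : ℕ)),
    ((partLift r d p.1 - partLift r d p.2 + ((p.2 : ℕ) : ℚ) - ((p.1 : ℕ) : ℚ)) /
      (((p.2 : ℕ) : ℚ) - ((p.1 : ℕ) : ℚ)))

/-- The self-dual irreducible `A_r`-module of highest weight `d` is *symplectic*
(it carries an invariant alternating form); by Steinberg's criterion this happens
exactly when `⟨d, 2ρ^∨⟩ = ∑ d_k · k(r+1-k)` is odd. -/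
def IsSympWt (r : ℕ) (d : Fin r → ℕ) : Prop :=
  Odd (∑ i : Fin r, d i * ((i : ℕ) + 1) * (r - (i : ℕ)))

/-! ### The classical types `B`, `C`, `D` -/

/-- Convenient access to the `k`-th (0-indexed) coordinate. -/
def cval {n : ℕ} (c : Fin n → ℕ) (k : ℕ) : ℚ := if h : k < n then (c ⟨k, h⟩ : ℚ) else 0

/-- `ε`-coordinates of the dominant weight of the classical group of type `t` and rank `n`
with coordinates `c` in the basis of fundamental weights (Bourbaki numbering). -/
def epsWt (t : CType) (n : ℕ) (c : Fin n → ℕ) : Fin n → ℚ := fun i =>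
  (∑ k ∈ Finset.univ.filter (fun k : Fin n => (i : ℕ) ≤ (k : ℕ)), (c k : ℚ)) -
    (match t with
      | .C => 0
      | .B => cval c (n - 1) / 2
      | .D => (cval c (n - 2) + cval c (n - 1)) / 2)

/-- The half-sum of the positive roots in `ε`-coordinates. -/
def rhoY (t : CType) (n : ℕ) : Fin n → ℚ := fun i =>
  match t with
  | .C => (n : ℚ) - (i : ℕ)
  | .B => (n : ℚ) - (i : ℕ) - 1 / 2
  | .D => (n : ℚ) - 1 - (i : ℕ)

/-- The Weyl alternating sum for the classical group of type `t` and rank `n`: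
the Weyl group consists of the signed permutations of the coordinates,
with evenly many sign changes in type `D`. -/
def altY (t : CType) (n : ℕ) (v : Fin n → ℚ) : CharRing n :=
  ∑ σ : Equiv.Perm (Fin n), ∑ s : Fin n → Bool,
    if t = CType.D ∧ ¬ Even (Finset.univ.filter (fun i => s i = true)).card then 0
    else (((Equiv.Perm.sign σ : ℤˣ) : ℤ) *
          (-1) ^ (Finset.univ.filter (fun i => s i = true)).card) •
      mono (fun i => (if s i then -1 else 1) * v (σ i))

/-- `IsCharY t n c f` : `f` is the formal character of the irreducible module of highest
weight `c` for the classical group of type `t` and rank `n` (Weyl character formula). -/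
def IsCharY (t : CType) (n : ℕ) (c : Fin n → ℕ) (f : CharRing n) : Prop :=
  altY t n (rhoY t n) * f = altY t n (epsWt t n c + rhoY t n)

/-! ### The embedding `X = A_r < Y` via `δ`, and restriction of characters -/

/-- `WtSys t n r δ w` : `w` lists "half" of the weights of the natural module
`W = V_X(δ)` of the classical group `Y` of type `t` and rank `n`, for `X = A_r`:
the weights of `W` (with multiplicity) are exactly the `± w i`, together with one
extra zero weight in type `B`.  Such a `w` records a maximal torus embedding
`T_X → T_Y` realising the irreducible embedding `X < Y = SO(W)` or `Sp(W)` given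
by the representation of highest weight `δ`. -/
def WtSys (t : CType) (n r : ℕ) (δ : Fin r → ℕ)
    (w : Fin n → (Fin (r + 1) → ℚ)) : Prop :=
  ((∑ i : Fin n, (mono (w i) + mono (-(w i)))) +
      (if t = CType.B then mono (0 : Fin (r + 1) → ℚ) else 0)) * altA r (rhoA r)
    = altA r (slWt r δ + rhoA r)

/-- Restriction of characters from `Y` to `X = A_r` along the torus embedding
recorded by `w`. -/
def resChar {n r : ℕ} (w : Fin n → (Fin (r + 1) → ℚ)) (F : CharRing n) :
    CharRing (r + 1) :=
  AddMonoidAlgebra.mapDomain (fun v : Fin n → ℚ => ∑ i : Fin n, v i • w i) F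

/-- `IsMFRes t n r δ lam` : in the embedding `X = A_r < Y` (the classical group of type
`t` and rank `n`) given by the irreducible representation of highest weight `δ`, the
restriction to `X` of the irreducible `Y`-module of highest weight `lam` is
multiplicity-free: its character is a sum of *distinct* irreducible characters of `X`. -/
def IsMFRes (t : CType) (n r : ℕ) (δ : Fin r → ℕ) (lam : Fin n → ℕ) : Prop :=
  ∀ w, WtSys t n r δ w → ∀ f, IsCharY t n lam f →
    ∃ c : (Fin r → ℕ) →₀ ℕ, Decomp r (resChar w f) c ∧ ∀ μ, c μ ≤ 1

/-- The operation `e^v ↦ e^{k·v}` on characters (Adams operation on the torus),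
used to express symmetric and exterior powers of characters. -/
def pw {m : ℕ} (k : ℕ) (F : CharRing m) : CharRing m :=
  AddMonoidAlgebra.mapDomain (fun v : Fin m → ℚ => (k : ℚ) • v) F

/-- The irreducible `A_r`-module of highest weight `d` carries a nonzero invariant
*symmetric* bilinear form, i.e. the trivial module occurs in its symmetric square
(whose character `S` satisfies `2S = f² + f^{[2]}`). -/
def HasSymForm (r : ℕ) (d : Fin r → ℕ) : Prop :=
  ∀ f, IsCharA r d f →
    ∃ c : (Fin r → ℕ) →₀ ℕ,
      (f * f + pw 2 f) * altA r (rhoA r)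
          = c.sum (fun μ k => ((2 * k : ℕ) : ℤ) • altA r (slWt r μ + rhoA r)) ∧ 1 ≤ c 0

/-- The irreducible `A_r`-module of highest weight `d` carries a nonzero invariant
*alternating* bilinear form, i.e. the trivial module occurs in its exterior square
(whose character `Λ` satisfies `2Λ = f² - f^{[2]}`). -/
def HasAltForm (r : ℕ) (d : Fin r → ℕ) : Prop :=
  ∀ f, IsCharA r d f →
    ∃ c : (Fin r → ℕ) →₀ ℕ,
      (f * f - pw 2 f) * altA r (rhoA r)
          = c.sum (fun μ k => ((2 * k : ℕ) : ℤ) • altA r (slWt r μ + rhoA r)) ∧ 1 ≤ c 0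

end MFPaper

open MFPaper

/-!
The characters of `Λ³V` and `Λ²V ⊗ V` are the averages over `S₃` of `u π • p_π(f)`, where `p_π(f)`
is the product of the `f^{[k]}` over the cycle lengths `k` of `π`, and `u` is the sign character,
respectively the sign times the permutation character on three points (values `3, -1, 0`).
With the character of `V` written as a Schur function, i.e. as the average of `χ_l(π) • p_π` over
`S_N` for a Specht character `χ_l`, the multiplicities in such an average become inner products of
characters of `S_N ≀ S₃`: `u` times the wreath power of `χ_l`, against the Specht characters of
`S_{3N}`. Hence they are natural numbers.

By Weyl's formula the multiplicity at `ε` is the coefficient of `e^{ε+ρ}` in the product of the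
character with the alternating sum `a_ρ`. Only the weights `ν - pα_j - qα_{j+1}` with `p ≤ 1` and
`q ≤ 2` of `f` contribute, and for `a ≥ 1`, `b ≥ 2` their multiplicities are those of the Verma
module, the coefficients of `1 / ((1 - x)(1 - y)(1 - xy))`. The products of `f³`, `f·f^{[2]}` and
`f^{[3]}` with `a_ρ` then have coefficients `10`, `0` and `1`, so the two multiplicities are
`(10 - 3·0 + 2·1) / 6 = 2` and `(10 - 0) / 2 = 5`.
-/

namespace MFPaper

open Finset
open scoped Kronecker

section Characters

variable {k G : Type*} [Field k] [Group G]

theorem trace_eq_trace_restrict_add_trace_mapQ {V : Type*} [AddCommGroup V] [Module k V]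
    [FiniteDimensional k V] (W : Submodule k V) (f : V →ₗ[k] V) (hW : W ≤ W.comap f) :
    LinearMap.trace k V f =
      LinearMap.trace k W (f.restrict hW) + LinearMap.trace k (V ⧸ W) (W.mapQ W f hW) := by
  obtain ⟨s, hs⟩ := LinearMap.exists_rightInverse_of_surjective W.mkQ (by simp)
  have mkQ_section : ∀ y, W.mkQ (s y) = y := LinearMap.congr_fun hs
  let r : V →ₗ[k] W := LinearMap.codRestrict W (LinearMap.id - s ∘ₗ W.mkQ) fun v => by
    rw [← Submodule.Quotient.mk_eq_zero W, ← Submodule.mkQ_apply]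
    simp only [LinearMap.sub_apply, LinearMap.id_apply, LinearMap.comp_apply, map_sub,
      mkQ_section, sub_self]
  have decomposition : f = (f ∘ₗ W.subtype) ∘ₗ r + (f ∘ₗ s) ∘ₗ W.mkQ := by
    ext v
    simp [r]
  have restrict_eq : r ∘ₗ f ∘ₗ W.subtype = f.restrict hW := by
    ext v
    have : W.mkQ (f v) = 0 := by
      rw [← LinearMap.mem_ker, Submodule.ker_mkQ]
      exact hW v.2
    simp only [r, LinearMap.comp_apply, LinearMap.codRestrict_apply, LinearMap.sub_apply,
      Submodule.subtype_apply, this, map_zero, sub_zero, LinearMap.id_apply,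
      LinearMap.coe_restrict_apply]
  have mapQ_eq : W.mkQ ∘ₗ f ∘ₗ s = W.mapQ W f hW := by
    refine LinearMap.ext fun y => ?_
    conv_rhs => rw [← mkQ_section y]
    simp
  conv_lhs => rw [decomposition]
  rw [map_add, LinearMap.trace_comp_comm' r, LinearMap.trace_comp_comm' W.mkQ, restrict_eq,
    mapQ_eq]

/-- `χ` is the character of a finite-dimensional representation of `G` over `k`. -/
def IsCharacter (χ : G → k) : Prop :=
  ∃ (d : ℕ) (A : Representation k G (Fin d → k)), A.character = χ

theorem exists_fin_representation_character_eq {V : Type*} [AddCommGroup V] [Module k V]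
    [FiniteDimensional k V] (A : Representation k G V) :
    ∃ A' : Representation k G (Fin (Module.finrank k V) → k), A'.character = A.character := by
  let b := (Module.finBasis k V).equivFun
  refine ⟨(b.conjAlgEquiv k : Module.End k V →* _).comp A, ?_⟩
  funext g
  exact LinearMap.trace_conj' (A g) b

theorem isCharacter_character {V : Type*} [AddCommGroup V] [Module k V] [FiniteDimensional k V]
    (A : Representation k G V) : IsCharacter A.character :=
  ⟨_, exists_fin_representation_character_eq A⟩

theorem isCharacter_trace {ι : Type*} [Fintype ι] [DecidableEq ι] (P : G →* Matrix ι ι k) :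
    IsCharacter fun g => (P g).trace := by
  have key : (fun g => (P g).trace) = Representation.character
      ((Matrix.toLinAlgEquiv' (R := k) (n := ι) : Matrix ι ι k →* _).comp P :
        Representation k G (ι → k)) := by
    funext g
    exact (Matrix.trace_toLin'_eq (P g)).symm
  rw [key]
  exact isCharacter_character _

namespace IsCharacter

variable {χ χ₁ χ₂ : G → k}

theorem exists_matrix (h : IsCharacter χ) :
    ∃ (d : ℕ) (P : G →* Matrix (Fin d) (Fin d) k), ∀ g, (P g).trace = χ g := by
  obtain ⟨d, A, rfl⟩ := h
  let toMatrix : Module.End k (Fin d → k) →* Matrix (Fin d) (Fin d) k :=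
    (LinearMap.toMatrixAlgEquiv' (R := k) (n := Fin d)).toRingEquiv
  refine ⟨d, toMatrix.comp A, fun g => ?_⟩
  rw [Representation.character, LinearMap.trace_eq_matrix_trace k (Pi.basisFun k (Fin d))]
  rfl

theorem mul (h₁ : IsCharacter χ₁) (h₂ : IsCharacter χ₂) : IsCharacter (χ₁ * χ₂) := by
  obtain ⟨_, A, rfl⟩ := h₁
  obtain ⟨_, B, rfl⟩ := h₂
  rw [← Representation.char_tensor]
  exact isCharacter_character _

theorem comp {H : Type*} [Group H] (h : IsCharacter χ) (φ : H →* G) :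
    IsCharacter fun x => χ (φ x) := by
  obtain ⟨d, A, rfl⟩ := h
  exact ⟨d, A.comp φ, rfl⟩

theorem conj_apply (h : IsCharacter χ) (g x : G) : χ (x * g * x⁻¹) = χ g := by
  obtain ⟨_, A, rfl⟩ := h
  exact Representation.char_conj A g x

theorem exists_sum_eq_card_mul [CharZero k] [Fintype G] (h : IsCharacter χ) :
    ∃ n : ℕ, ∑ g, χ g = Nat.card G * n := by
  obtain ⟨_, A, rfl⟩ := h
  have hG : (Nat.card G : k) ≠ 0 := Nat.cast_ne_zero.mpr Nat.card_pos.ne'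
  let _ := invertibleOfNonzero hG
  exact ⟨_, (inv_mul_eq_iff_eq_mul₀ hG).mp (Representation.card_inv_mul_sum_char_eq_finrank A)⟩

end IsCharacter

theorem isCharacter_monoidHom (φ : G →* k) : IsCharacter φ := by
  simpa using isCharacter_trace ((Matrix.scalar Unit : k →+* Matrix Unit Unit k).toMonoidHom.comp φ)

theorem isCharacter_card_fixed {Y : Type*} [Fintype Y] [DecidableEq Y]
    (φ : G →* Equiv.Perm Y) : IsCharacter fun g => (#{y | φ g y = y} : k) := by
  have trace_eq (g : G) :
      (Matrix.permMatrixHom.comp φ g : Matrix Y Y k).trace = #{y | φ g y = y} := by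
    change (Equiv.Perm.permMatrix k (φ g)⁻¹).trace = _
    rw [← Matrix.transpose_permMatrix, Matrix.trace_transpose, Matrix.trace_permutation,
      Set.ncard_eq_toFinset_card', Set.toFinset_card, Fintype.card_subtype]
    rfl
  simpa only [trace_eq] using isCharacter_trace (k := k) (Matrix.permMatrixHom.comp φ)

section Cancellation

variable {V W : Type*} [AddCommGroup V] [Module k V] [FiniteDimensional k V]
  [AddCommGroup W] [Module k W] [FiniteDimensional k W]

theorem character_eq_subrepresentation_add_quotient {A : Representation k G V}
    (U : Subrepresentation A) :
    A.character = U.toRepresentation.character +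
      (A.quotient U.toSubmodule fun g _ hv => U.apply_mem_toSubmodule g hv).character :=
  funext fun g => trace_eq_trace_restrict_add_trace_mapQ U.toSubmodule (A g)
    fun _ hv => U.apply_mem_toSubmodule g hv

theorem character_sub_character_eq_ker_sub_coker {A : Representation k G V}
    {B : Representation k G W} (φ : A.IntertwiningMap B) :
    A.character - B.character = φ.ker.toRepresentation.character -
      (B.quotient φ.range.toSubmodule
        fun g _ hv => φ.range.apply_mem_toSubmodule g hv).character := by
  have coimage_equiv_image :
      (A.quotient φ.ker.toSubmodule fun g _ hv => φ.ker.apply_mem_toSubmodule g hv).Equiv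
        φ.range.toRepresentation :=
    Representation.Equiv.mk φ.toLinearMap.quotKerEquivRange fun g => by
      apply Submodule.linearMap_qext
      ext v
      exact φ.isIntertwining _ _ g v
  rw [character_eq_subrepresentation_add_quotient φ.ker,
    character_eq_subrepresentation_add_quotient φ.range,
    Representation.char_iso coimage_equiv_image]
  abel

theorem finrank_eq_zero_of_finrank_intertwiningMap_eq_zero {A : Representation k G V}
    (h : Module.finrank k (A.IntertwiningMap A) = 0) : Module.finrank k V = 0 := by
  have := Module.Finite.equiv (Representation.invariantsEquivIntertwiningMap A A)
  have := Module.finrank_zero_iff.mp h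
  have id_eq_zero := Subsingleton.elim (Representation.IntertwiningMap.id A) 0
  rw [Module.finrank_zero_iff, subsingleton_iff_forall_eq 0]
  exact fun v => congrArg (fun φ : A.IntertwiningMap A => φ v) id_eq_zero

variable [CharZero k] [Fintype G]

theorem sum_character_mul_character_inv (A : Representation k G V) (B : Representation k G W) :
    ∑ g, B.character g * A.character g⁻¹ =
      Nat.card G * Module.finrank k (A.IntertwiningMap B) := by
  have hG : (Nat.card G : k) ≠ 0 := Nat.cast_ne_zero.mpr Nat.card_pos.ne'
  let _ := invertibleOfNonzero hG
  exact (inv_mul_eq_iff_eq_mul₀ hG).mp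
    (Representation.card_inv_mul_sum_char_mul_char_eq_finrank A B)

theorem sum_character_sub_mul_inv_eq (A : Representation k G V) (B : Representation k G W)
    (hAB : ∀ φ : A.IntertwiningMap B, φ = 0) :
    ∑ g, (A.character g - B.character g) * (A.character g⁻¹ - B.character g⁻¹) =
      Nat.card G * (Module.finrank k (A.IntertwiningMap A) +
        Module.finrank k (B.IntertwiningMap B) : ℕ) := by
  have hom_eq_zero : Module.finrank k (A.IntertwiningMap B) = 0 :=
    have : Subsingleton (A.IntertwiningMap B) := subsingleton_of_forall_eq 0 hAB
    Module.finrank_zero_of_subsingleton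
  have pair_BA : ∑ g, B.character g * A.character g⁻¹ = 0 := by
    rw [sum_character_mul_character_inv, hom_eq_zero, Nat.cast_zero, mul_zero]
  have pair_AB : ∑ g, A.character g * B.character g⁻¹ = 0 := by
    rw [← pair_BA, ← Equiv.sum_comp (Equiv.inv G)]
    simp [mul_comm]
  calc _ = ∑ g, A.character g * A.character g⁻¹ + ∑ g, B.character g * B.character g⁻¹ -
        ∑ g, B.character g * A.character g⁻¹ - ∑ g, A.character g * B.character g⁻¹ := by
        simp only [← Finset.sum_add_distrib, ← Finset.sum_sub_distrib]
        exact Finset.sum_congr rfl fun g _ => by ring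
    _ = _ := by
        rw [pair_AB, pair_BA, sum_character_mul_character_inv, sum_character_mul_character_inv]
        push_cast
        ring

end Cancellation

theorem exists_character_sub_eq_of_no_intertwiner (d : ℕ) :
    ∀ (A : Representation k G (Fin d → k)) {e : ℕ} (B : Representation k G (Fin e → k)),
      ∃ (d' e' : ℕ) (A' : Representation k G (Fin d' → k)) (B' : Representation k G (Fin e' → k)),
        A.character - B.character = A'.character - B'.character ∧
          ∀ φ : A'.IntertwiningMap B', φ = 0 := by
  induction d using Nat.strong_induction_on with
  | _ d ih =>
    intro A e B
    by_cases hAB : ∀ φ : A.IntertwiningMap B, φ = 0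
    · exact ⟨d, e, A, B, rfl, hAB⟩
    push Not at hAB
    obtain ⟨φ, hφ⟩ := hAB
    have ker_lt : Module.finrank k φ.ker.toSubmodule < d := by
      conv_rhs => rw [← Module.finrank_fin_fun k (n := d)]
      refine Submodule.finrank_lt fun ker_top => hφ ?_
      exact Representation.IntertwiningMap.ext (LinearMap.ker_eq_top.mp ker_top)
    obtain ⟨A₁, hA₁⟩ := exists_fin_representation_character_eq φ.ker.toRepresentation
    obtain ⟨B₁, hB₁⟩ := exists_fin_representation_character_eq
      (B.quotient φ.range.toSubmodule fun g _ hv => φ.range.apply_mem_toSubmodule g hv)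
    obtain ⟨d', e', A', B', hsub, hzero⟩ := ih _ ker_lt A₁ B₁
    refine ⟨d', e', A', B', ?_, hzero⟩
    rw [character_sub_character_eq_ker_sub_coker φ, ← hA₁, ← hB₁, hsub]

theorem IsCharacter.sub_of_norm_one [CharZero k] [Fintype G] {χ₁ χ₂ : G → k} (h₁ : IsCharacter χ₁)
    (h₂ : IsCharacter χ₂)
    (norm_one : ∑ g, (χ₁ g - χ₂ g) * (χ₁ g⁻¹ - χ₂ g⁻¹) = Nat.card G)
    {n : ℕ} (sub_one : χ₁ 1 - χ₂ 1 = n) : IsCharacter (χ₁ - χ₂) := by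
  obtain ⟨d₁, A₁, rfl⟩ := h₁
  obtain ⟨d₂, B₁, rfl⟩ := h₂
  obtain ⟨d, e, A, B, hsub, hAB⟩ := exists_character_sub_eq_of_no_intertwiner d₁ A₁ B₁
  have sub_apply (g : G) : A₁.character g - B₁.character g = A.character g - B.character g :=
    congrFun hsub g
  have hG : (Nat.card G : k) ≠ 0 := Nat.cast_ne_zero.mpr Nat.card_pos.ne'
  have finrank_add : Module.finrank k (A.IntertwiningMap A) +
      Module.finrank k (B.IntertwiningMap B) = 1 := by
    simp only [sub_apply] at norm_one
    rw [sum_character_sub_mul_inv_eq A B hAB] at norm_one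
    exact_mod_cast mul_left_cancel₀ hG (norm_one.trans (mul_one _).symm)
  rw [sub_apply, Representation.char_one, Representation.char_one, Module.finrank_fin_fun,
    Module.finrank_fin_fun, sub_eq_iff_eq_add] at sub_one
  have dim_B : Module.finrank k (Fin e → k) = 0 := by
    rcases Nat.eq_zero_or_pos (Module.finrank k (B.IntertwiningMap B)) with hB | hB
    · exact finrank_eq_zero_of_finrank_intertwiningMap_eq_zero hB
    · have dim_A := finrank_eq_zero_of_finrank_intertwiningMap_eq_zero (A := A) (by omega)
      rw [Module.finrank_fin_fun] at dim_A ⊢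
      have : d = n + e := by exact_mod_cast sub_one
      omega
  have char_B : B.character = 0 := by
    have := Module.finrank_zero_iff.mp dim_B
    funext g
    rw [Representation.character, Subsingleton.elim (B g) 0, map_zero, Pi.zero_apply]
  exact ⟨d, A, by rw [hsub, char_B, sub_zero]⟩

end Characters

section Colorings

variable {X ι : Type*} [Fintype X] [DecidableEq ι]

/-- The content of a coloring `c`: how often each color is used. -/
def content (c : X → ι) (i : ι) : ℕ := #{a | c a = i}

theorem content_comp_perm (c : X → ι) (τ : Equiv.Perm X) : content (c ∘ τ) = content c := by
  funext i
  exact card_equiv τ fun a => by simp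

theorem exists_perm_comp_eq {c c' : X → ι} (h : content c = content c') :
    ∃ τ : Equiv.Perm X, c ∘ τ = c' := by
  have card_fiber (i : ι) : Fintype.card {a // c' a = i} = Fintype.card {a // c a = i} := by
    simpa only [content, Fintype.card_subtype] using congrFun h.symm i
  exact ⟨Equiv.ofFiberEquiv fun i => Fintype.equivOfCardEq (card_fiber i),
    funext fun a => Equiv.ofFiberEquiv_map _ a⟩

theorem card_perm_comp_eq [DecidableEq X] {c c' : X → ι} (h : content c = content c') :
    #{τ : Equiv.Perm X | c ∘ τ = c'} = #{τ : Equiv.Perm X | c' ∘ τ = c'} := by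
  obtain ⟨τ₀, rfl⟩ := exists_perm_comp_eq h
  refine card_equiv (Equiv.mulLeft τ₀⁻¹) fun τ => ?_
  rw [mem_filter_univ, mem_filter_univ, Equiv.coe_mulLeft, Function.comp_assoc,
    ← Equiv.Perm.coe_mul, mul_inv_cancel_left]

variable [Fintype ι]

theorem prod_pow_content {M : Type*} [CommMonoid M] (x : ι → M) (c : X → ι) :
    ∏ i, x i ^ content c i = ∏ a, x (c a) := by
  rw [← prod_fiberwise univ c]
  refine prod_congr rfl fun i _ => ?_
  rw [prod_congr rfl fun a ha => congrArg x (mem_filter.mp ha).2, prod_const, content]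

theorem sum_content (c : X → ι) : ∑ i, content c i = Fintype.card X :=
  (card_eq_sum_card_fiberwise fun _ _ => mem_univ _).symm

theorem exists_content_eq (γ : ι → ℕ) (hγ : ∑ i, γ i = Fintype.card X) :
    ∃ c : X → ι, content c = γ := by
  have card_eq : Fintype.card X = Fintype.card (Σ i, Fin (γ i)) := by simp [hγ]
  let u := Fintype.equivOfCardEq card_eq
  refine ⟨fun a => (u a).1, funext fun i => ?_⟩
  rw [content, ← Fintype.card_subtype,
    Fintype.card_congr (u.subtypeEquiv (q := fun s => s.1 = i) fun _ => Iff.rfl),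
    Fintype.card_congr (Equiv.sigmaSubtype i), Fintype.card_fin]

-- Weighted Burnside lemma: the orbits of `Perm X` on colorings are classified by the content.
theorem sum_perm_sum_fixed_coloring [DecidableEq X] {M : Type*} [AddCommMonoid M]
    (F : (ι → ℕ) → M) :
    ∑ π : Equiv.Perm X, ∑ c : X → ι with c ∘ π = c, F (content c) =
      (Fintype.card X).factorial • ∑ γ ∈ piAntidiag univ (Fintype.card X), F γ := by
  have stabilizers (γ : ι → ℕ) (hγ : γ ∈ piAntidiag univ (Fintype.card X)) :
      ∑ c : X → ι with content c = γ, #{π : Equiv.Perm X | c ∘ π = c} =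
        (Fintype.card X).factorial := by
    obtain ⟨c₀, rfl⟩ := exists_content_eq (X := X) γ (mem_piAntidiag.mp hγ).1
    calc _ = ∑ c : X → ι with content c = content c₀, #{τ : Equiv.Perm X | c₀ ∘ τ = c} :=
          sum_congr rfl fun c hc => (card_perm_comp_eq (mem_filter.mp hc).2.symm).symm
      _ = #(univ : Finset (Equiv.Perm X)) := (card_eq_sum_card_fiberwise fun τ _ => by
          simp [content_comp_perm]).symm
      _ = _ := by rw [card_univ, Fintype.card_perm]
  calc _ = ∑ c : X → ι, #{π : Equiv.Perm X | c ∘ π = c} • F (content c) := by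
        simp only [sum_filter, card_filter, sum_smul, ite_smul, one_smul, zero_smul]
        exact sum_comm
    _ = ∑ γ ∈ piAntidiag univ (Fintype.card X),
          ∑ c : X → ι with content c = γ, #{π : Equiv.Perm X | c ∘ π = c} • F (content c) :=
        (sum_fiberwise_of_maps_to (fun c _ => by simp [sum_content]) _).symm
    _ = ∑ γ ∈ piAntidiag univ (Fintype.card X), (Fintype.card X).factorial • F γ := by
        refine sum_congr rfl fun γ hγ => ?_
        rw [← stabilizers γ hγ, sum_smul]
        exact sum_congr rfl fun c hc => by rw [(mem_filter.mp hc).2]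
    _ = _ := smul_sum.symm

end Colorings

section JacobiTrudi

variable {R : Type*} [CommRing R]

/-- The complete homogeneous symmetric polynomial of degree `r` evaluated at `x`. -/
def completeHomogeneous {ι : Type*} [Fintype ι] [DecidableEq ι] (r : ℕ) (x : ι → R) : R :=
  ∑ γ ∈ piAntidiag univ r, ∏ i, x i ^ γ i

theorem coeff_prod_geometric {ι : Type*} [Fintype ι] [DecidableEq ι] (r : ℕ) (x : ι → R) :
    PowerSeries.coeff r (∏ i, PowerSeries.mk (x i ^ ·)) = completeHomogeneous r x := by
  rw [PowerSeries.coeff_prod, completeHomogeneous]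
  refine sum_bij' (fun γ _ => γ) (fun γ _ => Finsupp.equivFunOnFinite.symm γ) ?_ ?_ ?_ ?_ ?_ <;>
    simp

theorem geometric_mul_one_sub (a : R) :
    PowerSeries.mk (a ^ ·) * (1 - PowerSeries.C a * PowerSeries.X) = 1 := by
  ext r
  cases r with
  | zero => simp [mul_sub]
  | succ r =>
    rw [mul_sub, mul_one, ← mul_assoc, map_sub, PowerSeries.coeff_succ_mul_X]
    simp [pow_succ]

theorem coeff_mul_polynomial (H : PowerSeries R) {p : Polynomial R} {n : ℕ}
    (hp : p.natDegree < n) (N : ℕ) :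
    PowerSeries.coeff N (H * (p : PowerSeries R)) =
      ∑ t ∈ range n, (if t ≤ N then PowerSeries.coeff (N - t) H else 0) * p.coeff t := by
  conv_lhs => rw [p.as_sum_range' n hp]
  rw [← Polynomial.coeToPowerSeries.ringHom_apply, map_sum, mul_sum, map_sum]
  refine sum_congr rfl fun t _ => ?_
  rw [← Polynomial.C_mul_X_pow_eq_monomial, Polynomial.coeToPowerSeries.ringHom_apply,
    Polynomial.coe_mul, Polynomial.coe_pow, Polynomial.coe_C, Polynomial.coe_X, ← mul_assoc,
    PowerSeries.coeff_mul_X_pow', PowerSeries.coeff_mul_C, ite_mul, zero_mul]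

variable {n : ℕ}

/-- The exponents `n - 1, …, 1, 0` of the Vandermonde determinant. -/
def staircase (n : ℕ) (i : Fin n) : ℕ := i.rev

/-- The alternant `det (x_j ^ l_i)`. -/
def alternant (l : Fin n → ℕ) (x : Fin n → R) : R := (Matrix.of fun i j => x j ^ l i).det

theorem alternant_eq_sum (l : Fin n → ℕ) (x : Fin n → R) :
    alternant l x = ∑ σ : Equiv.Perm (Fin n), (σ.sign : ℤ) • ∏ i, x i ^ l (σ i) :=
  Matrix.det_apply _

/-- The Jacobi–Trudi matrix. The exponents are those of the alternant in the numerator of the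
Weyl character formula, i.e. the parts of the partition shifted by the staircase. -/
def jacobiTrudi (l : Fin n → ℕ) (x : Fin n → R) : Matrix (Fin n) (Fin n) R :=
  Matrix.of fun i j =>
    if staircase n j ≤ l i then completeHomogeneous (l i - staircase n j) x else 0

/-- The Schur function with shifted exponents `l`, defined by the Jacobi–Trudi determinant. -/
def schur (l : Fin n → ℕ) (x : Fin n → R) : R := (jacobiTrudi l x).det

/-- The polynomial `∏ (1 - x_i T)`, with the factor of the variable `x_j` omitted. -/
def coreciprocal (x : Fin n → R) (j : Fin n) : Polynomial R :=
  ∏ i ∈ univ.erase j, (1 - Polynomial.C (x i) * Polynomial.X)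

theorem natDegree_coreciprocal_lt (x : Fin n → R) (j : Fin n) :
    (coreciprocal x j).natDegree < n := by
  have degree_le : (coreciprocal x j).natDegree ≤ #(univ.erase j) • 1 :=
    (Polynomial.natDegree_prod_le _ _).trans
      (sum_le_card_nsmul _ _ 1 fun i _ => by compute_degree)
  have := j.pos
  rw [card_erase_of_mem (mem_univ j), card_univ, Fintype.card_fin, smul_eq_mul] at degree_le
  omega

theorem prod_geometric_mul_coreciprocal (x : Fin n → R) (j : Fin n) :
    (∏ i, PowerSeries.mk (x i ^ ·)) * (coreciprocal x j : PowerSeries R) =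
      PowerSeries.mk (x j ^ ·) := by
  have coe_eq : (coreciprocal x j : PowerSeries R) =
      ∏ i ∈ univ.erase j, (1 - PowerSeries.C (x i) * PowerSeries.X) := by
    rw [coreciprocal, ← Polynomial.coeToPowerSeries.ringHom_apply, map_prod]
    simp
  rw [coe_eq, ← mul_prod_erase _ _ (mem_univ j), mul_assoc, ← prod_mul_distrib,
    prod_eq_one fun i _ => geometric_mul_one_sub (x i), mul_one]

theorem jacobiTrudi_mul_coreciprocal (l : Fin n → ℕ) (x : Fin n → R) :
    jacobiTrudi l x * Matrix.of (fun i j => (coreciprocal x j).coeff (staircase n i)) =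
      Matrix.of fun i j => x j ^ l i := by
  ext i j
  have coeff_eq := congrArg (PowerSeries.coeff (l i)) (prod_geometric_mul_coreciprocal x j)
  rw [coeff_mul_polynomial _ (natDegree_coreciprocal_lt x j), PowerSeries.coeff_mk,
    sum_range, ← Equiv.sum_comp Fin.revPerm] at coeff_eq
  simp only [coeff_prod_geometric] at coeff_eq
  exact coeff_eq

theorem det_jacobiTrudi_staircase (x : Fin n → R) : (jacobiTrudi (staircase n) x).det = 1 := by
  rw [Matrix.det_of_isUpperTriangular]
  · refine prod_eq_one fun i _ => ?_
    simp [jacobiTrudi, completeHomogeneous]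
  · intro i j hij
    have staircase_lt : staircase n i < staircase n j := Fin.rev_lt_rev.mpr hij
    rw [jacobiTrudi, Matrix.of_apply, if_neg staircase_lt.not_ge]

theorem schur_mul_alternant_staircase (l : Fin n → ℕ) (x : Fin n → R) :
    schur l x * alternant (staircase n) x = alternant l x := by
  rw [alternant, alternant, ← jacobiTrudi_mul_coreciprocal l,
    ← jacobiTrudi_mul_coreciprocal (staircase n), Matrix.det_mul, Matrix.det_mul,
    det_jacobiTrudi_staircase, one_mul, schur]

variable {S : Type*} [CommRing S] (φ : R →+* S)

theorem map_alternant (l : Fin n → ℕ) (x : Fin n → R) :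
    φ (alternant l x) = alternant l (φ ∘ x) := by
  simp [alternant_eq_sum]

theorem map_completeHomogeneous {ι : Type*} [Fintype ι] [DecidableEq ι] (r : ℕ) (x : ι → R) :
    φ (completeHomogeneous r x) = completeHomogeneous r (φ ∘ x) := by
  simp [completeHomogeneous]

theorem map_schur (l : Fin n → ℕ) (x : Fin n → R) : φ (schur l x) = schur l (φ ∘ x) := by
  rw [schur, schur, RingHom.map_det]
  congr 1
  ext i j
  simp [jacobiTrudi, apply_ite φ, map_completeHomogeneous]

end JacobiTrudi

section Frobenius

theorem content_fst {X ι κ : Type*} [Fintype X] [Fintype ι] [DecidableEq ι]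
    [DecidableEq κ] (c : X → κ × ι) (i : κ) :
    ∑ j, content c (i, j) = content (fun a => (c a).1) i := by
  simp only [content]
  rw [card_eq_sum_card_fiberwise (f := fun a => (c a).2) (t := univ) fun _ _ => mem_univ _]
  simp only [filter_filter, Prod.ext_iff]

variable {X ι R : Type*} [Fintype X] [DecidableEq X] [Fintype ι] [DecidableEq ι] [CommRing R]

/-- The power sum symmetric function, evaluated at `x`, of the cycle type of `π`: equivalently the
trace on `V^{⊗ X}` of `π` composed with a diagonal operator on `V` with eigenvalues `x`. -/
def powerSum (π : Equiv.Perm X) (x : ι → R) : R := ∑ c : X → ι with c ∘ π = c, ∏ a, x (c a)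

theorem prod_completeHomogeneous {κ : Type*} [Fintype κ] [DecidableEq κ] (β : κ → ℕ) (x : ι → R) :
    ∏ i, completeHomogeneous (β i) x =
      ∑ γ ∈ piAntidiag univ (∑ i, β i) with ∀ i, ∑ j, γ (i, j) = β i,
        ∏ p : κ × ι, x p.2 ^ γ p := by
  simp only [completeHomogeneous, prod_univ_sum]
  refine sum_nbij' (fun δ p => δ p.1 p.2) (fun γ i j => γ (i, j)) ?_ ?_ ?_ ?_ ?_
  · simp +contextual [Fintype.sum_prod_type]
  · simp
  · simp
  · simp
  · simp [Fintype.prod_prod_type]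

theorem sum_perm_card_content_smul_powerSum {κ : Type*} [Fintype κ] [DecidableEq κ] (β : κ → ℕ)
    (hβ : ∑ i, β i = Fintype.card X) (x : ι → R) :
    ∑ π : Equiv.Perm X, #{c : X → κ | c ∘ π = c ∧ content c = β} • powerSum π x =
      (Fintype.card X).factorial • ∏ i, completeHomogeneous (β i) x := by
  have pair_colorings (π : Equiv.Perm X) :
      #{c : X → κ | c ∘ π = c ∧ content c = β} • powerSum π x =
        ∑ c : X → κ × ι with c ∘ π = c,
          if ∀ i, ∑ j, content c (i, j) = β i then ∏ p : κ × ι, x p.2 ^ content c p else 0 := by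
    rw [← sum_const, powerSum]
    simp only [content_fst, ← funext_iff, prod_pow_content (fun p : κ × ι => x p.2)]
    rw [← sum_filter, filter_filter, ← sum_product' (f := fun _ (c : X → ι) => ∏ a, x (c a))]
    refine sum_nbij' (fun p a => (p.1 a, p.2 a)) (fun c => (fun a => (c a).1, fun a => (c a).2))
      ?_ ?_ ?_ ?_ ?_
    · simp +contextual [funext_iff]
    · simp +contextual [funext_iff]
    · simp
    · simp
    · simp
  simp only [pair_colorings]
  rw [sum_perm_sum_fixed_coloring fun γ : κ × ι → ℕ =>
    if ∀ i, ∑ j, γ (i, j) = β i then ∏ p, x p.2 ^ γ p else 0, prod_completeHomogeneous, hβ,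
    sum_filter]

theorem powerSum_mul_alternant {n : ℕ} (π : Equiv.Perm X) (v : Fin n → ℕ) (x : Fin n → R) :
    powerSum π x * alternant v x =
      ∑ c : X → Fin n with c ∘ π = c, alternant (v + content c) x := by
  simp only [powerSum, alternant_eq_sum, mul_sum]
  rw [sum_comm (s := filter _ _)]
  refine sum_congr rfl fun σ _ => ?_
  simp only [mul_smul_comm, ← smul_sum, sum_mul]
  congr 1
  refine sum_equiv (Equiv.arrowCongr (Equiv.refl X) σ) (fun c => ?_) fun c _ => ?_
  · simp [funext_iff]
  · have content_relabel (i : Fin n) : content (σ ∘ c) (σ i) = content c i := by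
      simp [content]
    rw [← prod_pow_content, ← prod_mul_distrib]
    refine prod_congr rfl fun i _ => ?_
    rw [← content_relabel, ← pow_add, add_comm]
    rfl

variable {n : ℕ}

/-- The coefficient of the alternant of `l` in the product of the power sum of `π` and the
alternant of the staircase. By Frobenius, the value at `π` of the irreducible character of the
symmetric group attached to the partition with shifted parts `l`. -/
def frobChar (l : Fin n → ℕ) (π : Equiv.Perm X) : ℤ :=
  ∑ σ : Equiv.Perm (Fin n),
    σ.sign * #{c : X → Fin n | c ∘ π = c ∧ staircase n + content c = l ∘ σ}

theorem sum_frobChar_smul_powerSum (l : Fin n → ℕ) (x : Fin n → R)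
    (hl : ∑ i, l i = Fintype.card X + ∑ i, staircase n i) :
    ∑ π : Equiv.Perm X, frobChar l π • powerSum π x =
      (Fintype.card X).factorial • schur l x := by
  have row_expansion (σ : Equiv.Perm (Fin n)) : ∑ π : Equiv.Perm X,
      #{c : X → Fin n | c ∘ π = c ∧ staircase n + content c = l ∘ σ} • powerSum π x =
        (Fintype.card X).factorial • ∏ j, jacobiTrudi l x (σ j) j := by
    by_cases hσ : ∀ j, staircase n j ≤ l (σ j)
    · have sum_sub : ∑ j, (l (σ j) - staircase n j) = Fintype.card X := by
        rw [sum_tsub_distrib _ fun j _ => hσ j, Equiv.sum_comp σ l, hl, Nat.add_sub_cancel]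
      have content_iff (c : X → Fin n) : staircase n + content c = l ∘ σ ↔
          content c = fun j => l (σ j) - staircase n j := by
        simp only [funext_iff, Pi.add_apply, Function.comp_apply]
        exact forall_congr' fun j => by have := hσ j; omega
      simp only [content_iff, sum_perm_card_content_smul_powerSum _ sum_sub]
      simp [jacobiTrudi, hσ]
    · push Not at hσ
      obtain ⟨j, hj⟩ := hσ
      have no_coloring (π : Equiv.Perm X) :
          #{c : X → Fin n | c ∘ π = c ∧ staircase n + content c = l ∘ σ} = 0 := by
        rw [card_eq_zero, filter_eq_empty_iff]
        rintro c - ⟨-, hc⟩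
        exact hj.not_ge (le_of_add_le_left (congrFun hc j).le)
      have factor_eq_zero : jacobiTrudi l x (σ j) j = 0 := by simp [jacobiTrudi, hj]
      have prod_zero : ∏ j, jacobiTrudi l x (σ j) j = 0 := prod_eq_zero (mem_univ j) factor_eq_zero
      simp only [no_coloring, prod_zero, zero_smul, sum_const_zero, smul_zero]
  simp only [frobChar, sum_smul, mul_smul, natCast_zsmul]
  rw [sum_comm, schur, Matrix.det_apply, smul_sum]
  refine sum_congr rfl fun σ _ => ?_
  rw [← smul_sum, row_expansion, smul_comm, Units.smul_def]

/-- The strictly decreasing sequences `l` obtained by adding the staircase to the partitions of `N`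
into at most `n` parts. -/
def shiftedPartitions (n N : ℕ) : Finset (Fin n → ℕ) :=
  {l ∈ piAntidiag univ (N + ∑ i, staircase n i) | StrictAnti l}

theorem alternant_comp_perm (l : Fin n → ℕ) (σ : Equiv.Perm (Fin n)) (x : Fin n → R) :
    alternant (l ∘ σ) x = (σ.sign : ℤ) • alternant l x := by
  rw [zsmul_eq_mul]
  exact Matrix.det_permute σ (Matrix.of fun i j => x j ^ l i)

theorem alternant_eq_zero_of_not_injective {l : Fin n → ℕ} (hl : ¬ Function.Injective l)
    (x : Fin n → R) : alternant l x = 0 := by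
  obtain ⟨i, j, hij, hne⟩ := Function.not_injective_iff.mp hl
  exact Matrix.det_zero_of_row_eq hne (by ext; simp [hij])

theorem eq_of_strictAnti_of_comp_perm_eq {α : Type*} [LinearOrder α] {l l' : Fin n → α}
    (hl : StrictAnti l) (hl' : StrictAnti l') {σ σ' : Equiv.Perm (Fin n)}
    (h : l ∘ σ = l' ∘ σ') : l = l' :=
  (hl.range_inj hl').mp <| by rw [← σ.surjective.range_comp l, h, σ'.surjective.range_comp]

theorem exists_strictAnti_comp_perm {u : Fin n → ℕ} (hu : Function.Injective u) :
    ∃ (l : Fin n → ℕ) (σ : Equiv.Perm (Fin n)), StrictAnti l ∧ u = l ∘ σ := by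
  let τ := Tuple.sort (OrderDual.toDual ∘ u)
  have antitone_sorted : Antitone (u ∘ τ) := Tuple.monotone_sort (OrderDual.toDual ∘ u)
  exact ⟨u ∘ τ, τ⁻¹, antitone_sorted.strictAnti_of_injective (hu.comp τ.injective),
    by rw [Function.comp_assoc, ← Equiv.Perm.coe_mul, mul_inv_cancel, Equiv.Perm.coe_one,
      Function.comp_id]⟩

theorem mem_shiftedPartitions {N : ℕ} {l : Fin n → ℕ} :
    l ∈ shiftedPartitions n N ↔ ∑ i, l i = N + ∑ i, staircase n i ∧ StrictAnti l := by
  simp [shiftedPartitions]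

theorem alternant_eq_sum_shiftedPartitions {N : ℕ} {u : Fin n → ℕ}
    (hu : ∑ i, u i = N + ∑ i, staircase n i) (x : Fin n → R) :
    alternant u x = ∑ l ∈ shiftedPartitions n N,
      (∑ σ : Equiv.Perm (Fin n), if u = l ∘ σ then (σ.sign : ℤ) else 0) • alternant l x := by
  by_cases hinj : Function.Injective u
  · obtain ⟨l, σ, hl, rfl⟩ := exists_strictAnti_comp_perm hinj
    rw [sum_eq_single l]
    · simp [hl.injective.comp_left.eq_iff, alternant_comp_perm]
    · intro l' hl' hne
      rw [sum_eq_zero fun σ' _ => if_neg fun h => hne ?_, zero_smul]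
      exact eq_of_strictAnti_of_comp_perm_eq (mem_shiftedPartitions.mp hl').2 hl h.symm
    · intro hmem
      refine absurd (mem_shiftedPartitions.mpr ⟨?_, hl⟩) hmem
      rw [← hu, ← Equiv.sum_comp σ l]
      rfl
  · rw [alternant_eq_zero_of_not_injective hinj, sum_eq_zero]
    intro l hl
    rw [sum_eq_zero fun σ _ => if_neg ?_, zero_smul]
    rintro rfl
    exact hinj ((mem_shiftedPartitions.mp hl).2.injective.comp σ.injective)

theorem powerSum_mul_alternant_staircase (π : Equiv.Perm X) (x : Fin n → R) :
    powerSum π x * alternant (staircase n) x =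
      ∑ l ∈ shiftedPartitions n (Fintype.card X),
        frobChar l π • alternant l x := by
  have sum_eq (c : X → Fin n) :
      ∑ i, (staircase n + content c) i = Fintype.card X + ∑ i, staircase n i := by
    simp only [Pi.add_apply, sum_add_distrib, sum_content, add_comm]
  rw [powerSum_mul_alternant,
    sum_congr rfl fun c _ => alternant_eq_sum_shiftedPartitions (sum_eq c) x, sum_comm]
  refine sum_congr rfl fun l _ => ?_
  simp only [← sum_smul, frobChar]
  rw [sum_comm]
  simp only [← sum_filter, filter_filter, sum_const, nsmul_eq_mul, mul_comm]

end Frobenius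

section FormalCharacters

variable {k r : ℕ}

theorem mono_add (v w : Fin k → ℚ) : mono (v + w) = mono v * mono w := by
  simp [mono, AddMonoidAlgebra.single_mul_single]

theorem mono_sum {ι : Type*} (s : Finset ι) (v : ι → Fin k → ℚ) :
    mono (∑ i ∈ s, v i) = ∏ i ∈ s, mono (v i) :=
  map_prod (AddMonoidAlgebra.of ℤ (Fin k → ℚ)) (fun i => Multiplicative.ofAdd (v i)) s

theorem mono_nsmul (N : ℕ) (v : Fin k → ℚ) : mono (N • v) = mono v ^ N := by
  simp [mono, AddMonoidAlgebra.single_pow]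

theorem coeff_altA (v w : Fin (r + 1) → ℚ) :
    (altA r v).coeff w =
      ∑ σ : Equiv.Perm (Fin (r + 1)), if v ∘ σ = w then (σ.sign : ℤ) else 0 := by
  rw [altA, AddMonoidAlgebra.coeff_sum, Finsupp.finsetSum_apply]
  refine sum_congr rfl fun σ _ => ?_
  rw [AddMonoidAlgebra.coeff_smul, Finsupp.smul_apply, mono, AddMonoidAlgebra.coeff_single,
    Finsupp.single_apply]
  simp [Function.comp_def]

theorem coeff_altA_of_strictAnti {v w : Fin (r + 1) → ℚ} (hv : StrictAnti v)
    (hw : StrictAnti w) : (altA r v).coeff w = if v = w then 1 else 0 := by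
  rw [coeff_altA]
  rcases eq_or_ne v w with rfl | hne
  · simp only [hv.injective.comp_left.eq_iff' (Function.comp_id v), ← Equiv.Perm.coe_one,
      DFunLike.coe_fn_eq]
    simp
  · rw [if_neg hne]
    exact sum_eq_zero fun σ _ => if_neg fun h =>
      hne (eq_of_strictAnti_of_comp_perm_eq hv hw (σ' := 1) h)

/-- The formal exponentials of the coordinate weights: the variables in which the characters of
polynomial representations are symmetric functions. -/
def coord (k : ℕ) (i : Fin k) : CharRing k := mono (Pi.single i 1)

theorem prod_coord_pow (l : Fin k → ℕ) : ∏ i, coord k i ^ l i = mono fun i => (l i : ℚ) := by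
  simp only [coord, ← mono_nsmul, ← mono_sum]
  congr 1
  ext i
  simp [Pi.single_apply]

theorem alternant_coord (l : Fin (r + 1) → ℕ) :
    alternant l (coord (r + 1)) = altA r fun i => (l i : ℚ) := by
  rw [alternant_eq_sum, altA]
  exact sum_congr rfl fun σ _ => by rw [← prod_coord_pow fun i => l (σ i)]

theorem coeff_alternant_coord {l l' : Fin (r + 1) → ℕ} (hl : StrictAnti l) (hl' : StrictAnti l') :
    (alternant l (coord (r + 1))).coeff (fun i => (l' i : ℚ)) = if l = l' then 1 else 0 := by
  have strictAnti_cast {l : Fin (r + 1) → ℕ} (hl : StrictAnti l) : StrictAnti fun i => (l i : ℚ) :=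
    Nat.strictMono_cast.comp_strictAnti hl
  rw [alternant_coord, coeff_altA_of_strictAnti (strictAnti_cast hl) (strictAnti_cast hl')]
  simp [funext_iff]

end FormalCharacters

section SpechtCharacters

variable {X : Type*} [Fintype X] [DecidableEq X] {r n : ℕ} {l : Fin (r + 1) → ℕ}

theorem coeff_powerSum_mul_alternant_staircase
    (hl : l ∈ shiftedPartitions (r + 1) (Fintype.card X)) (π : Equiv.Perm X) :
    (powerSum π (coord (r + 1)) * alternant (staircase (r + 1)) (coord (r + 1))).coeff
      (fun i => (l i : ℚ)) = frobChar l π := by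
  have anti := (mem_shiftedPartitions.mp hl).2
  rw [powerSum_mul_alternant_staircase, AddMonoidAlgebra.coeff_sum, Finsupp.finsetSum_apply,
    sum_eq_single_of_mem l hl]
  · rw [AddMonoidAlgebra.coeff_smul, Finsupp.smul_apply, coeff_alternant_coord anti anti,
      if_pos rfl, smul_eq_mul, mul_one]
  · intro l' hl' hne
    rw [AddMonoidAlgebra.coeff_smul, Finsupp.smul_apply,
      coeff_alternant_coord (mem_shiftedPartitions.mp hl').2 anti, if_neg hne, smul_zero]

theorem sum_frobChar_mul_self (hl : l ∈ shiftedPartitions (r + 1) (Fintype.card X)) :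
    ∑ π : Equiv.Perm X, frobChar l π * frobChar l π = (Fintype.card X).factorial := by
  obtain ⟨sum_eq, anti⟩ := mem_shiftedPartitions.mp hl
  have frobenius := congrArg (fun F => (F * alternant (staircase _) (coord _)).coeff
    fun i => (l i : ℚ)) (sum_frobChar_smul_powerSum (X := X) l (coord (r + 1)) sum_eq)
  simpa only [sum_mul, smul_mul_assoc, schur_mul_alternant_staircase, AddMonoidAlgebra.coeff_sum,
    Finsupp.finsetSum_apply, AddMonoidAlgebra.coeff_smul, Finsupp.smul_apply,
    coeff_powerSum_mul_alternant_staircase hl, coeff_alternant_coord anti anti, if_pos,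
    smul_eq_mul, Nat.smul_one_eq_cast] using frobenius

omit [Fintype X] [DecidableEq X] in
theorem comp_perm_inv_eq_iff {ι : Type*} (c : X → ι) (π : Equiv.Perm X) :
    c ∘ ⇑π⁻¹ = c ↔ c ∘ π = c :=
  (Equiv.comp_symm_eq π c c).trans eq_comm

theorem frobChar_inv (l : Fin n → ℕ) (π : Equiv.Perm X) : frobChar l π⁻¹ = frobChar l π := by
  simp only [frobChar, comp_perm_inv_eq_iff]

theorem powerSum_one {ι R : Type*} [Fintype ι] [DecidableEq ι] [CommRing R] (x : ι → R) :
    powerSum (1 : Equiv.Perm X) x = (∑ i, x i) ^ Fintype.card X := by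
  simp only [powerSum, Equiv.Perm.coe_one, Function.comp_id, filter_true, ← card_univ,
    ← prod_const, prod_univ_sum, Fintype.piFinset_univ]

theorem strictAnti_staircase (n : ℕ) : StrictAnti (staircase n) :=
  fun _ _ h => Fin.rev_lt_rev.mpr h

theorem antitone_add_single {v : Fin n → ℕ} (hv : StrictAnti v) (i : Fin n) :
    Antitone (v + Pi.single i 1) := by
  refine antitone_iff_forall_lt.mpr fun a b hab => ?_
  have := hv hab
  simp only [Pi.add_apply, Pi.single_apply]
  split_ifs <;> omega

theorem sum_mul_alternant {R : Type*} [CommRing R] (v : Fin n → ℕ) (x : Fin n → R) :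
    (∑ i, x i) * alternant v x = ∑ i, alternant (v + Pi.single i 1) x := by
  have pieri := powerSum_mul_alternant (1 : Equiv.Perm Unit) v x
  rw [powerSum_one, Fintype.card_unit, pow_one] at pieri
  rw [pieri]
  simp only [Equiv.Perm.coe_one, Function.comp_id, filter_true]
  refine Fintype.sum_equiv (Equiv.funUnique Unit (Fin n)) _ _ fun c => congrArg (alternant · x) ?_
  ext i
  simp [content, Pi.single_apply, filter_singleton, apply_ite, eq_comm]

theorem sum_pow_mul_alternant_mem_closure {R : Type*} [CommRing R] {v : Fin n → ℕ}
    (hv : StrictAnti v) (x : Fin n → R) (N : ℕ) :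
    (∑ i, x i) ^ N * alternant v x ∈
      AddSubmonoid.closure {F | ∃ l : Fin n → ℕ, StrictAnti l ∧ F = alternant l x} := by
  induction N with
  | zero => exact AddSubmonoid.subset_closure ⟨v, hv, by simp⟩
  | succ N ih =>
    rw [pow_succ', mul_assoc]
    refine AddSubmonoid.closure_induction ?_ (by simp) (fun F G _ _ hF hG => ?_) ih
    · rintro - ⟨l, hl, rfl⟩
      rw [sum_mul_alternant]
      refine sum_mem fun i _ => ?_
      by_cases hinj : Function.Injective (l + Pi.single i 1)
      · exact AddSubmonoid.subset_closure
          ⟨_, (antitone_add_single hl i).strictAnti_of_injective hinj, rfl⟩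
      · exact alternant_eq_zero_of_not_injective hinj x ▸ zero_mem _
    · rw [mul_add]
      exact add_mem hF hG

theorem frobChar_one_nonneg (hl : l ∈ shiftedPartitions (r + 1) (Fintype.card X)) :
    0 ≤ frobChar l (1 : Equiv.Perm X) := by
  rw [← coeff_powerSum_mul_alternant_staircase hl, powerSum_one]
  refine AddSubmonoid.closure_induction
    (motive := fun F _ => 0 ≤ (F : CharRing (r + 1)).coeff fun i => (l i : ℚ)) ?_ le_rfl
    (fun F G _ _ hF hG => ?_)
    (sum_pow_mul_alternant_mem_closure (strictAnti_staircase _) (coord (r + 1)) (Fintype.card X))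
  · rintro - ⟨l', hl', rfl⟩
    rw [coeff_alternant_coord hl' (mem_shiftedPartitions.mp hl).2]
    positivity
  · rw [AddMonoidAlgebra.coeff_add, Finsupp.add_apply]
    exact add_nonneg hF hG

theorem isCharacter_sum_card_fixed_colorings {K κ ι : Type*} [Field K] [Fintype κ] [Fintype ι]
    [DecidableEq ι] (P : κ → (ι → ℕ) → Prop) [∀ s, DecidablePred (P s)] :
    IsCharacter fun π : Equiv.Perm X =>
      ((∑ s, #{c : X → ι | c ∘ π = c ∧ P s (content c)} : ℕ) : K) := by
  let Y := {p : κ × (X → ι) // P p.1 (content p.2)}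
  let act : Equiv.Perm X →* Equiv.Perm Y := MonoidHom.toHomPerm
    { toFun π p := ⟨(p.1.1, p.1.2 ∘ ⇑π⁻¹), by rw [content_comp_perm]; exact p.2⟩
      map_one' := rfl
      map_mul' _ _ := rfl }
  classical
  have card_fixed (π : Equiv.Perm X) :
      #{y | act π y = y} = ∑ s, #{c : X → ι | c ∘ π = c ∧ P s (content c)} := by
    have mem_fixed (y : Y) : act π y = y ↔ y.1.2 ∘ π = y.1.2 := by
      rw [← comp_perm_inv_eq_iff, Subtype.ext_iff, Prod.ext_iff]
      exact and_iff_right rfl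
    rw [← card_sigma]
    refine card_bij (fun y _ => ⟨y.1.1, y.1.2⟩) ?_ ?_ ?_
    · intro y hy
      simpa [← mem_fixed y, y.2] using hy
    · intro y _ y' _ h
      exact Subtype.ext (Prod.ext_iff.mpr (by simpa using h))
    · rintro ⟨s, c⟩ hc
      obtain ⟨fixed, hP⟩ : c ∘ π = c ∧ P s (content c) := by simpa using hc
      exact ⟨⟨(s, c), hP⟩, by simpa [mem_fixed] using fixed, rfl⟩
  simp only [← card_fixed]
  exact isCharacter_card_fixed act

theorem isCharacter_frobChar (hl : l ∈ shiftedPartitions (r + 1) (Fintype.card X)) :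
    IsCharacter fun π : Equiv.Perm X => (frobChar l π : ℚ) := by
  let signed (s : ℤˣ) (π : Equiv.Perm X) : ℚ := (∑ σ : Equiv.Perm (Fin (r + 1)),
    #{c : X → Fin (r + 1) | c ∘ π = c ∧ σ.sign = s ∧ staircase _ + content c = l ∘ σ} : ℕ)
  have isCharacter_signed (s : ℤˣ) : IsCharacter (signed s) :=
    isCharacter_sum_card_fixed_colorings (fun (σ : Equiv.Perm (Fin (r + 1))) γ =>
      σ.sign = s ∧ staircase _ + γ = l ∘ σ)
  have signed_sub (π : Equiv.Perm X) : signed 1 π - signed (-1) π = frobChar l π := by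
    simp only [signed, frobChar]
    push_cast
    rw [← sum_sub_distrib]
    refine sum_congr rfl fun σ _ => ?_
    rcases Int.units_eq_one_or σ.sign with h | h <;> simp [h]
  obtain ⟨d, hd⟩ := Int.eq_ofNat_of_zero_le (frobChar_one_nonneg (X := X) hl)
  simp only [← signed_sub]
  refine (isCharacter_signed 1).sub_of_norm_one (isCharacter_signed (-1)) ?_ (n := d) ?_
  · simp only [signed_sub, frobChar_inv, Nat.card_eq_fintype_card, Fintype.card_perm]
    exact_mod_cast sum_frobChar_mul_self hl
  · rw [signed_sub, hd]
    rfl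

end SpechtCharacters

section CyclicTrace

variable {α ι R : Type*} [Fintype α] [DecidableEq α] [Fintype ι] [CommRing R]

/-- The trace of `(⨂ₐ N a) ∘ τ` on `V^{⊗ α}`, with `τ` permuting the tensor factors. -/
def cyclicTrace (τ : Equiv.Perm α) (N : α → Matrix ι ι R) : R :=
  ∑ c : α → ι, ∏ a, N a (c a) (c (τ⁻¹ a))

theorem cyclicTrace_kronecker {κ : Type*} [Fintype κ] (τ : Equiv.Perm α) (M : α → Matrix κ κ R)
    (N : α → Matrix ι ι R) :
    cyclicTrace τ (fun a => M a ⊗ₖ N a) = cyclicTrace τ M * cyclicTrace τ N := by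
  simp only [cyclicTrace]
  rw [sum_mul_sum, ← sum_product', univ_product_univ]
  exact Fintype.sum_equiv (Equiv.arrowProdEquivProdArrow α _ _) _ _ fun c => prod_mul_distrib

theorem cyclicTrace_sum {S : Type*} [Fintype S] (τ : Equiv.Perm α) (N : S → Matrix ι ι R) :
    ∑ s : α → S, cyclicTrace τ (fun a => N (s a)) = cyclicTrace τ fun _ => ∑ s, N s := by
  simp only [cyclicTrace, Matrix.sum_apply, prod_univ_sum, Fintype.piFinset_univ]
  exact sum_comm

theorem cyclicTrace_map {R' : Type*} [CommRing R'] (φ : R →+* R') (τ : Equiv.Perm α)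
    (N : α → Matrix ι ι R) : cyclicTrace τ (fun a => (N a).map φ) = φ (cyclicTrace τ N) := by
  simp [cyclicTrace]

theorem cyclicTrace_conj (τ σ : Equiv.Perm α) (N : Matrix ι ι R) :
    (cyclicTrace (σ * τ * σ⁻¹) fun _ => N) = cyclicTrace τ fun _ => N := by
  refine Fintype.sum_equiv (Equiv.arrowCongr σ.symm (Equiv.refl ι)) _ _ fun c => ?_
  exact Fintype.prod_equiv σ.symm _ _ fun a => by simp

end CyclicTrace

section Wreath

variable (α G : Type*) [Group G]

/-- The wreath product of `G` with the symmetric group on `α`. -/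
abbrev WreathProduct : Type _ :=
  (α → G) ⋊[(mulAutArrow : Equiv.Perm α →* MulAut (α → G))] Equiv.Perm α

variable {α G}

theorem WreathProduct.mul_left_apply (g h : WreathProduct α G) (a : α) :
    (g * h).left a = g.left a * h.left (g.right⁻¹ a) := rfl

/-- The action of the wreath product on `α` copies of `X`. -/
def wreathPerm (X : Type*) : WreathProduct α (Equiv.Perm X) →* Equiv.Perm (α × X) :=
  MonoidHom.toHomPerm
    { toFun g p := (g.right p.1, g.left (g.right p.1) p.2)
      map_one' := rfl
      map_mul' g h := by
        funext p
        change ((g * h).right p.1, (g * h).left ((g * h).right p.1) p.2) =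
          (g.right (h.right p.1), g.left (g.right (h.right p.1)) (h.left (h.right p.1) p.2))
        simp [WreathProduct.mul_left_apply] }

theorem wreathPerm_apply {X : Type*}
    (g : WreathProduct α (Equiv.Perm X)) (p : α × X) :
    wreathPerm X g p = (g.right p.1, g.left (g.right p.1) p.2) := rfl

variable {ι R : Type*} [Fintype α] [DecidableEq α] [Fintype ι] [DecidableEq ι] [CommRing R]

/-- The tensor power `V^{⊗ α}` as a matrix representation of the wreath product. -/
def wreathMatrix (P : G →* Matrix ι ι R) : WreathProduct α G →* Matrix (α → ι) (α → ι) R where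
  toFun g := Matrix.of fun c d => ∏ a, P (g.left a) (c a) (d (g.right⁻¹ a))
  map_one' := by
    ext c d
    simp only [Matrix.of_apply, SemidirectProduct.one_left, SemidirectProduct.one_right,
      Pi.one_apply, map_one, inv_one, Equiv.Perm.one_apply, Matrix.one_apply, funext_iff,
      Fintype.prod_ite_zero, prod_const_one]
  map_mul' g h := by
    ext c d
    simp only [Matrix.of_apply, WreathProduct.mul_left_apply, map_mul, Matrix.mul_apply,
      prod_univ_sum, Fintype.piFinset_univ]
    refine Fintype.sum_equiv (Equiv.arrowCongr g.right.symm (Equiv.refl ι)) _ _ fun b => ?_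
    rw [prod_mul_distrib]
    congr 1
    · exact prod_congr rfl fun a _ => by simp
    · exact Fintype.prod_equiv g.right.symm _ _ fun a => by simp

variable {X : Type*} [Fintype X] [DecidableEq X]

/-- The operator on `V^{⊗ X}` composed of `π` and the diagonal operator with eigenvalues `x`. -/
def coloringMatrix (x : ι → R) (π : Equiv.Perm X) : Matrix (X → ι) (X → ι) R :=
  Matrix.of fun c d => if c ∘ π = d then ∏ a, x (c a) else 0

theorem trace_coloringMatrix (x : ι → R) (π : Equiv.Perm X) :
    (coloringMatrix x π).trace = powerSum π x := by
  simp [coloringMatrix, Matrix.trace, powerSum, sum_filter]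

theorem coloringMatrix_mul (x y : ι → R) (π ρ : Equiv.Perm X) :
    coloringMatrix x π * coloringMatrix y ρ = coloringMatrix (x * y) (π * ρ) := by
  ext c d
  simp only [coloringMatrix, Matrix.mul_apply, Matrix.of_apply, ite_mul, zero_mul]
  rw [sum_ite_eq univ (c ∘ π), if_pos (mem_univ _), mul_ite, mul_zero, Function.comp_assoc,
    ← Equiv.Perm.coe_mul]
  simp only [Pi.mul_apply, Function.comp_apply, prod_mul_distrib,
    Equiv.prod_comp π fun a => y (c a)]

theorem powerSum_wreathPerm (g : WreathProduct α (Equiv.Perm X)) (x : ι → R) :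
    powerSum (wreathPerm X g) x = cyclicTrace g.right fun a => coloringMatrix x (g.left a) := by
  have fixed_iff (c : α × X → ι) : c ∘ wreathPerm X g = c ↔
      ∀ a, (fun b => c (a, b)) ∘ g.left a = fun b => c (g.right⁻¹ a, b) := by
    rw [← g.right.forall_congr_right]
    simp [funext_iff, wreathPerm_apply]
  simp only [powerSum, cyclicTrace, sum_filter, coloringMatrix, Matrix.of_apply,
    Fintype.prod_ite_zero]
  refine Fintype.sum_equiv (Equiv.curry α X ι) _ _ fun c => if_congr (fixed_iff c) ?_ rfl
  exact Fintype.prod_prod_type _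

end Wreath

section TwistedSum

variable {X ι κ R : Type*} [Fintype X] [DecidableEq X] [Fintype ι] [DecidableEq ι] [Fintype κ]
  [CommRing R]

/-- The operator `∑_π P π ⊗ B π`, for `P` a representation of the symmetric group on `X` and
`B` its action on `V^{⊗ X}` twisted by the diagonal operator with eigenvalues `x`. Up to the factor
`|X|!`, it is the action of that operator on the Schur functor image of `V` attached to `P`. -/
def schurMatrix [DecidableEq κ] (P : Equiv.Perm X →* Matrix κ κ R) (x : ι → R) :
    Matrix (κ × (X → ι)) (κ × (X → ι)) R :=
  ∑ π, P π ⊗ₖ coloringMatrix x π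

variable [DecidableEq κ] (P : Equiv.Perm X →* Matrix κ κ R)

theorem trace_schurMatrix (x : ι → R) :
    (schurMatrix P x).trace = ∑ π, (P π).trace * powerSum π x := by
  simp only [schurMatrix, Matrix.trace_sum, Matrix.trace_kronecker, trace_coloringMatrix]

theorem trace_schurMatrix_of_trace_eq_frobChar {n : ℕ} {l : Fin n → ℕ}
    (hl : ∑ i, l i = Fintype.card X + ∑ i, staircase n i) {P : Equiv.Perm X →* Matrix κ κ R}
    (hP : ∀ π, (P π).trace = frobChar l π) (x : Fin n → R) :
    (schurMatrix P x).trace = (Fintype.card X).factorial • schur l x := by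
  simp only [trace_schurMatrix, hP, ← zsmul_eq_mul, sum_frobChar_smul_powerSum l x hl]

theorem schurMatrix_mul (x y : ι → R) :
    schurMatrix P x * schurMatrix P y =
      (Fintype.card X).factorial • schurMatrix P (x * y) := by
  rw [schurMatrix, schurMatrix, sum_mul_sum]
  simp only [← Matrix.mul_kronecker_mul, coloringMatrix_mul, ← map_mul]
  have reindex (ρ : Equiv.Perm X) :
      ∑ π, P (π * ρ) ⊗ₖ coloringMatrix (x * y) (π * ρ) = schurMatrix P (x * y) :=
    Fintype.sum_equiv (Equiv.mulRight ρ) _ _ fun π => rfl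
  rw [sum_comm]
  simp only [reindex, sum_const, card_univ, Fintype.card_perm]

theorem schurMatrix_pow (x : ι → R) (N : ℕ) :
    schurMatrix P x ^ (N + 1) =
      (Fintype.card X).factorial ^ N • schurMatrix P (x ^ (N + 1)) := by
  induction N with
  | zero => simp
  | succ N ih =>
    rw [pow_succ, ih, smul_mul_assoc, schurMatrix_mul, smul_smul, ← pow_succ, ← pow_succ]

theorem cyclicTrace_schurMatrix {α : Type*} [Fintype α] [DecidableEq α] (τ : Equiv.Perm α)
    (x : ι → R) :
    (cyclicTrace τ fun _ => schurMatrix P x) = ∑ g : α → Equiv.Perm X,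
      (cyclicTrace τ fun a => P (g a)) * cyclicTrace τ fun a => coloringMatrix x (g a) := by
  simp only [schurMatrix, ← cyclicTrace_sum, cyclicTrace_kronecker]

end TwistedSum

section Plethysm

theorem exists_sum_character_smul_powerSum_mul_alternant {Γ Y R : Type*} [Group Γ] [Fintype Γ]
    [Fintype Y] [DecidableEq Y] [CommRing R] [Algebra ℚ R] {r : ℕ} {ψ : Γ → ℚ} (hψ : IsCharacter ψ)
    (φ : Γ →* Equiv.Perm Y) (x : Fin (r + 1) → R) :
    ∃ c : (Fin (r + 1) → ℕ) → ℕ,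
      (∑ g, ψ g • powerSum (φ g) x) * alternant (staircase _) x =
        Nat.card Γ • ∑ l ∈ shiftedPartitions (r + 1) (Fintype.card Y),
          c l • alternant l x := by
  have multiplicity (l : Fin (r + 1) → ℕ) : ∃ c : ℕ,
      l ∈ shiftedPartitions (r + 1) (Fintype.card Y) →
        ∑ g, ψ g * frobChar l (φ g) = Nat.card Γ * c := by
    by_cases hl : l ∈ shiftedPartitions (r + 1) (Fintype.card Y)
    · obtain ⟨c, hc⟩ := (hψ.mul ((isCharacter_frobChar hl).comp φ)).exists_sum_eq_card_mul
      exact ⟨c, fun _ => hc⟩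
    · exact ⟨0, fun h => absurd h hl⟩
  choose c hc using multiplicity
  refine ⟨c, ?_⟩
  simp only [sum_mul, smul_mul_assoc, powerSum_mul_alternant_staircase, smul_sum]
  rw [sum_comm]
  refine sum_congr rfl fun l hl => ?_
  simp only [← Int.cast_smul_eq_zsmul ℚ, ← Nat.cast_smul_eq_nsmul ℚ, smul_smul, ← sum_smul, hc l hl]

variable {α X R : Type*} [Fintype α] [DecidableEq α] [Fintype X] [DecidableEq X] [CommRing R]
  [Algebra ℚ R] {r : ℕ}

theorem exists_plethysm_mul_alternant {κ : Type*} [Fintype κ] [DecidableEq κ]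
    {u : Equiv.Perm α → ℚ} (hu : IsCharacter u) (P : Equiv.Perm X →* Matrix κ κ ℚ)
    (x : Fin (r + 1) → R) :
    ∃ c : (Fin (r + 1) → ℕ) → ℕ,
      (∑ τ, u τ • cyclicTrace τ fun _ =>
          schurMatrix ((algebraMap ℚ R).mapMatrix.toMonoidHom.comp P) x) *
          alternant (staircase _) x =
        ((Fintype.card X).factorial ^ Fintype.card α * (Fintype.card α).factorial) •
          ∑ l ∈ shiftedPartitions (r + 1) (Fintype.card α * Fintype.card X),
            c l • alternant l x := by
  let ψ (g : WreathProduct α (Equiv.Perm X)) : ℚ :=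
    u g.right * cyclicTrace g.right fun a => P (g.left a)
  have isCharacter_ψ : IsCharacter ψ :=
    (hu.comp SemidirectProduct.rightHom).mul (isCharacter_trace (wreathMatrix P))
  let equiv : WreathProduct α (Equiv.Perm X) ≃ Equiv.Perm α × (α → Equiv.Perm X) :=
    SemidirectProduct.equivProd.trans (Equiv.prodComm _ _)
  have : Fintype (WreathProduct α (Equiv.Perm X)) := Fintype.ofEquiv _ equiv.symm
  have sum_eq : ∑ g, ψ g • powerSum (wreathPerm X g) x = ∑ τ, u τ • cyclicTrace τ fun _ =>
      schurMatrix ((algebraMap ℚ R).mapMatrix.toMonoidHom.comp P) x := by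
    simp only [cyclicTrace_schurMatrix, smul_sum, ← sum_product']
    refine Fintype.sum_equiv equiv _ _ fun g => ?_
    rw [powerSum_wreathPerm, mul_smul, Algebra.smul_def (cyclicTrace _ _), ← cyclicTrace_map]
    rfl
  have card_eq : Nat.card (WreathProduct α (Equiv.Perm X)) =
      (Fintype.card X).factorial ^ Fintype.card α * (Fintype.card α).factorial := by
    rw [SemidirectProduct.card, Nat.card_fun, Nat.card_perm, Nat.card_perm]
    simp only [Nat.card_eq_fintype_card]
  rw [← sum_eq, ← card_eq, ← Fintype.card_prod]
  exact exists_sum_character_smul_powerSum_mul_alternant isCharacter_ψ _ x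

end Plethysm

section ThirdPower

theorem sum_fin_three_arrow {ι M : Type*} [Fintype ι] [AddCommMonoid M] (F : ι → ι → ι → M) :
    ∑ c : Fin 3 → ι, F (c 0) (c 1) (c 2) = ∑ a, ∑ b, ∑ c, F a b c := by
  rw [← (Fin.consEquiv fun _ => ι).sum_comp, Fintype.sum_prod_type]
  refine sum_congr rfl fun a _ => ?_
  rw [← (finTwoArrowEquiv ι).symm.sum_comp, Fintype.sum_prod_type]
  rfl

theorem sum_perm_fin_three {M : Type*} [AddCommMonoid M] {F : Equiv.Perm (Fin 3) → M}
    (hF : ∀ τ σ, F (σ * τ * σ⁻¹) = F τ) :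
    ∑ τ, F τ = F 1 + 3 • F (Equiv.swap 0 1) + 2 • F (finRotate 3) := by
  have classes : (univ : Finset (Equiv.Perm (Fin 3))) =
      {1, Equiv.swap 0 1, Equiv.swap 0 2, Equiv.swap 1 2, finRotate 3, (finRotate 3)⁻¹} := by
    decide
  have swap_zero_two : F (Equiv.swap 0 2) = F (Equiv.swap 0 1) := by
    rw [← hF _ (Equiv.swap 1 2)]; congr 1; decide
  have swap_one_two : F (Equiv.swap 1 2) = F (Equiv.swap 0 1) := by
    rw [← hF _ (Equiv.swap 0 2)]; congr 1; decide
  have rotate_inv : F (finRotate 3)⁻¹ = F (finRotate 3) := by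
    rw [← hF _ (Equiv.swap 0 1)]; congr 1; decide
  rw [classes, sum_insert (by decide), sum_insert (by decide), sum_insert (by decide),
    sum_insert (by decide), sum_insert (by decide), sum_singleton, swap_zero_two, swap_one_two,
    rotate_inv]
  abel

section

variable {ι R : Type*} [Fintype ι] [CommRing R] (N : Matrix ι ι R)

theorem cyclicTrace_one {α : Type*} [Fintype α] [DecidableEq α] :
    (cyclicTrace (1 : Equiv.Perm α) fun _ => N) = N.trace ^ Fintype.card α := by
  simp only [cyclicTrace, inv_one, Equiv.Perm.one_apply, Matrix.trace, Matrix.diag, ← card_univ,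
    ← prod_const, prod_univ_sum, Fintype.piFinset_univ]

theorem cyclicTrace_swap :
    (cyclicTrace (Equiv.swap 0 1 : Equiv.Perm (Fin 3)) fun _ => N) =
      (N * N).trace * N.trace := by
  rw [cyclicTrace]
  have (c : Fin 3 → ι) : ∏ a, N (c a) (c ((Equiv.swap 0 1)⁻¹ a)) =
      N (c 0) (c 1) * N (c 1) (c 0) * N (c 2) (c 2) := by
    rw [Fin.prod_univ_three]; rfl
  simp only [this, sum_fin_three_arrow fun a b c => N a b * N b a * N c c, Matrix.trace,
    Matrix.diag, Matrix.mul_apply, sum_mul]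
  simp only [mul_sum]

theorem cyclicTrace_finRotate :
    (cyclicTrace (finRotate 3) fun _ => N) = (N * N * N).trace := by
  rw [cyclicTrace]
  have (c : Fin 3 → ι) : ∏ a, N (c a) (c ((finRotate 3)⁻¹ a)) =
      N (c 0) (c 2) * N (c 2) (c 1) * N (c 1) (c 0) := by
    rw [Fin.prod_univ_three]
    change N (c 0) (c 2) * N (c 1) (c 0) * N (c 2) (c 1) = _
    ring
  simp only [this, sum_fin_three_arrow fun a b c => N a c * N c b * N b a, Matrix.trace,
    Matrix.diag, Matrix.mul_apply, sum_mul]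

end

theorem exists_cubic_plethysm_mul_alternant {R : Type*} [CommRing R] [Algebra ℚ R] {r n : ℕ}
    {l : Fin (r + 1) → ℕ} (hl : l ∈ shiftedPartitions (r + 1) n) {u : Equiv.Perm (Fin 3) → ℚ}
    (hu : IsCharacter u) (x : Fin (r + 1) → R) :
    ∃ c : (Fin (r + 1) → ℕ) → ℕ,
      (u 1 • schur l x ^ 3 + (3 * u (Equiv.swap 0 1)) • (schur l x * schur l (x ^ 2)) +
          (2 * u (finRotate 3)) • schur l (x ^ 3)) * alternant (staircase _) x =
        6 • ∑ l' ∈ shiftedPartitions (r + 1) (3 * n), c l' • alternant l' x := by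
  obtain ⟨d, P, trace_P⟩ :=
    (isCharacter_frobChar (X := Fin n) (by rwa [Fintype.card_fin])).exists_matrix
  obtain ⟨c, hc⟩ := exists_plethysm_mul_alternant hu P x
  refine ⟨c, ?_⟩
  set N := schurMatrix ((algebraMap ℚ R).mapMatrix.toMonoidHom.comp P) x
  have trace_pow (j : ℕ) : (N ^ (j + 1)).trace =
      (n.factorial ^ (j + 1)) • schur l (x ^ (j + 1)) := by
    rw [schurMatrix_pow, Matrix.trace_smul, trace_schurMatrix_of_trace_eq_frobChar, smul_smul,
      Fintype.card_fin, ← pow_succ]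
    · rw [Fintype.card_fin]
      exact (mem_shiftedPartitions.mp hl).1
    · intro π
      change ((P π).map (algebraMap ℚ R)).trace = _
      rw [← AddMonoidHom.map_trace, trace_P]
      simp
  have sum_eq : (∑ τ, u τ • cyclicTrace τ fun _ => N) = n.factorial ^ 3 •
      (u 1 • schur l x ^ 3 + (3 * u (Equiv.swap 0 1)) • (schur l x * schur l (x ^ 2)) +
          (2 * u (finRotate 3)) • schur l (x ^ 3)) := by
    rw [sum_perm_fin_three fun τ σ => by rw [cyclicTrace_conj, hu.conj_apply], cyclicTrace_one,
      cyclicTrace_swap, cyclicTrace_finRotate, ← pow_two, ← pow_succ, trace_pow 1, trace_pow 2]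
    have trace_N : N.trace = n.factorial • schur l x := by simpa using trace_pow 0
    simp only [trace_N, Fintype.card_fin, Algebra.smul_def, map_mul, map_ofNat]
    push_cast
    ring
  have factorial_ne_zero : ((n.factorial ^ 3 : ℕ) : ℚ) ≠ 0 := by positivity
  refine smul_right_injective R factorial_ne_zero ?_
  simpa only [sum_eq, smul_mul_assoc, Fintype.card_fin, mul_smul, Nat.cast_smul_eq_nsmul,
    show Nat.factorial 3 = 6 from rfl] using hc

theorem exists_cubic_plethysm_coord {r n : ℕ} {l : Fin (r + 1) → ℕ}
    (hl : l ∈ shiftedPartitions (r + 1) n) {u : Equiv.Perm (Fin 3) → ℤ}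
    (hu : IsCharacter fun τ => (u τ : ℚ)) :
    ∃ c : (Fin (r + 1) → ℕ) → ℕ,
      (u 1 • schur l (coord _) ^ 3 +
          (3 * u (Equiv.swap 0 1)) • (schur l (coord _) * schur l (coord _ ^ 2)) +
          (2 * u (finRotate 3)) • schur l (coord _ ^ 3)) * alternant (staircase _) (coord _) =
        6 • ∑ l' ∈ shiftedPartitions (r + 1) (3 * n), c l' • alternant l' (coord _) := by
  let φ := AddMonoidAlgebra.mapRingHom (Fin (r + 1) → ℚ) (Int.castRingHom ℚ)
  have φ_injective : Function.Injective φ := AddMonoidAlgebra.map_injective _ Int.cast_injective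
  obtain ⟨c, hc⟩ := exists_cubic_plethysm_mul_alternant hl hu (φ ∘ coord (r + 1))
  refine ⟨c, φ_injective ?_⟩
  have map_coord_pow (j : ℕ) : φ ∘ (coord (r + 1) ^ j) = (φ ∘ coord (r + 1)) ^ j := by
    ext1 i
    simp
  simp only [map_mul, map_add, map_zsmul, map_nsmul, map_pow, map_sum, map_schur, map_alternant,
    map_coord_pow]
  rw [← hc]
  simp only [← Int.cast_smul_eq_zsmul ℚ, Int.cast_mul, Int.cast_ofNat]

end ThirdPower

section Weights

variable {r N : ℕ}

theorem slWt_castSucc_sub_succ (d : Fin r → ℕ) (i : Fin r) :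
    slWt r d i.castSucc - slWt r d i.succ = d i := by
  have filter_eq : ({j : Fin r | (i.castSucc : ℕ) ≤ j} : Finset _) =
      insert i ({j : Fin r | (i.succ : ℕ) ≤ j} : Finset _) := by
    ext j
    simp only [mem_filter_univ, mem_insert, Fin.ext_iff, Fin.val_castSucc, Fin.val_succ]
    omega
  rw [slWt, slWt, partLift, partLift, filter_eq, sum_insert (by simp)]
  ring

theorem sum_partLift (d : Fin r → ℕ) :
    ∑ i, partLift r d i = ∑ j : Fin r, (((j : ℕ) : ℚ) + 1) * (d j : ℚ) := by
  simp only [partLift, sum_filter]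
  rw [sum_comm]
  refine sum_congr rfl fun j _ => ?_
  have filter_eq : ({i : Fin (r + 1) | (i : ℕ) ≤ j} : Finset _) = Iic j.castSucc := by
    ext i
    simp [Fin.le_def]
  rw [← sum_filter, sum_const, nsmul_eq_mul, filter_eq, Fin.card_Iic]
  simp

theorem sum_slWt (d : Fin r → ℕ) : ∑ i, slWt r d i = 0 := by
  simp only [slWt, sum_sub_distrib, sum_partLift, sum_const, card_univ, Fintype.card_fin,
    nsmul_eq_mul]
  push_cast
  field_simp
  ring

theorem rhoA_castSucc_sub_succ (i : Fin r) : rhoA r i.castSucc - rhoA r i.succ = 1 := by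
  simp [rhoA]

theorem strictAnti_slWt_add_rhoA (d : Fin r → ℕ) : StrictAnti (slWt r d + rhoA r) := by
  refine Fin.strictAnti_iff_succ_lt.mpr fun i => ?_
  have := slWt_castSucc_sub_succ d i
  have := rhoA_castSucc_sub_succ i
  have : (0 : ℚ) ≤ d i := Nat.cast_nonneg _
  simp only [Pi.add_apply]
  linarith

theorem eq_of_sub_succ_eq_of_sum_eq {u v : Fin (r + 1) → ℚ}
    (sub_succ : ∀ i : Fin r, u i.castSucc - u i.succ = v i.castSucc - v i.succ)
    (sum_eq : ∑ i, u i = ∑ i, v i) : u = v := by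
  have sub_eq (i) : u i - v i = u 0 - v 0 := by
    induction i using Fin.induction with
    | zero => rfl
    | succ i ih => linarith [sub_succ i]
  have sum_sub : ∑ i, (u i - v i) = 0 := by rw [sum_sub_distrib, sum_eq, sub_self]
  simp only [sub_eq, sum_const, card_univ, Fintype.card_fin, nsmul_eq_mul] at sum_sub
  have zero_eq := (mul_eq_zero.mp sum_sub).resolve_left (by positivity)
  ext i
  linarith [sub_eq i]

theorem slWt_injective : Function.Injective (slWt r) := fun d d' h => by
  ext i
  exact_mod_cast (slWt_castSucc_sub_succ d i).symm.trans (h ▸ slWt_castSucc_sub_succ d' i)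

/-- The coordinates, in the basis of fundamental weights, of the highest weight whose partition
shifted by the staircase is `l`. -/
def gaps (l : Fin (r + 1) → ℕ) : Fin r → ℕ := fun i => l i.castSucc - l i.succ - 1

theorem slWt_gaps_add_rhoA {l : Fin (r + 1) → ℕ} (hl : l ∈ shiftedPartitions (r + 1) N) :
    (slWt r (gaps l) + rhoA r) + (fun _ => (N / (r + 1) : ℚ)) = fun i => (l i : ℚ) := by
  obtain ⟨sum_l, anti⟩ := mem_shiftedPartitions.mp hl
  refine eq_of_sub_succ_eq_of_sum_eq (fun i => ?_) ?_
  · have lt : l i.succ < l i.castSucc := anti Fin.castSucc_lt_succ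
    have gap : ((gaps l i : ℕ) : ℚ) = l i.castSucc - l i.succ - 1 := by
      rw [gaps, Nat.cast_sub (by omega), Nat.cast_sub lt.le, Nat.cast_one]
    simp only [Pi.add_apply]
    linarith [slWt_castSucc_sub_succ (gaps l) i, rhoA_castSucc_sub_succ i]
  · have sum_rhoA : ∑ i, rhoA r i = ∑ i, (staircase (r + 1) i : ℚ) :=
      sum_congr rfl fun i _ => by simp [rhoA, staircase, Fin.val_rev, Nat.cast_sub i.is_le]
    simp only [Pi.add_apply, sum_add_distrib, sum_slWt, sum_rhoA, sum_const, card_univ,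
      Fintype.card_fin, nsmul_eq_mul]
    rw [← Nat.cast_sum univ l, sum_l]
    push_cast
    field_simp
    ring

theorem exists_gaps_eq (d : Fin r → ℕ) :
    ∃ N, ∃ l ∈ shiftedPartitions (r + 1) N, gaps l = d := by
  let lift (i : Fin (r + 1)) : ℕ := ∑ j ∈ ({j : Fin r | (i : ℕ) ≤ (j : ℕ)} : Finset (Fin r)), d j
  have lift_castSucc (i : Fin r) : lift i.castSucc = d i + lift i.succ := by
    rw [← sum_insert (by simp)]
    refine sum_congr ?_ fun _ _ => rfl
    ext j
    simp only [mem_filter_univ, mem_insert, Fin.ext_iff, Fin.val_castSucc, Fin.val_succ]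
    omega
  have staircase_castSucc (i : Fin r) :
      staircase (r + 1) i.castSucc = staircase (r + 1) i.succ + 1 := by
    simp only [staircase, Fin.val_rev, Fin.val_castSucc, Fin.val_succ]
    omega
  refine ⟨∑ i, lift i, lift + staircase (r + 1), mem_shiftedPartitions.mpr ⟨?_, ?_⟩, ?_⟩
  · exact sum_add_distrib
  · refine Fin.strictAnti_iff_succ_lt.mpr fun i => ?_
    rw [Pi.add_apply, Pi.add_apply, lift_castSucc, staircase_castSucc]
    omega
  · ext i
    rw [gaps, Pi.add_apply, Pi.add_apply, lift_castSucc, staircase_castSucc]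
    omega

end Weights

section Adams

variable {k : ℕ}

/-- The Adams operation `pw n` as a ring homomorphism. -/
def adams (k n : ℕ) : CharRing k →+* CharRing k :=
  AddMonoidAlgebra.mapDomainRingHom ℤ (DistribSMul.toAddMonoidHom (Fin k → ℚ) (n : ℚ))

theorem adams_apply (n : ℕ) (F : CharRing k) : adams k n F = pw n F := rfl

theorem adams_mono (n : ℕ) (v : Fin k → ℚ) : adams k n (mono v) = mono (n • v) := by
  rw [adams_apply, pw, mono, AddMonoidAlgebra.mapDomain_single, Nat.cast_smul_eq_nsmul]
  rfl

theorem adams_comp_coord (n : ℕ) : adams k n ∘ coord k = coord k ^ n :=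
  funext fun _ => (adams_mono n _).trans (mono_nsmul n _)

end Adams

section Transfer

variable {r N : ℕ}

theorem altA_add_const (v : Fin (r + 1) → ℚ) (t : ℚ) :
    altA r (v + fun _ => t) = mono (fun _ => t) * altA r v := by
  simp only [altA, mul_sum, mul_smul_comm, ← mono_add]
  refine sum_congr rfl fun σ _ => ?_
  congr 2
  ext i
  exact add_comm _ _

theorem alternant_coord_eq_mono_mul_altA {l : Fin (r + 1) → ℕ}
    (hl : l ∈ shiftedPartitions (r + 1) N) :
    alternant l (coord (r + 1)) =
      mono (fun _ => (N / (r + 1) : ℚ)) * altA r (slWt r (gaps l) + rhoA r) := by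
  rw [alternant_coord, ← slWt_gaps_add_rhoA hl, altA_add_const]

theorem alternant_staircase_coord : alternant (staircase (r + 1)) (coord (r + 1)) =
    altA r (rhoA r) := by
  rw [alternant_coord]
  congr 1
  ext i
  simp [rhoA, staircase, Fin.val_rev, Nat.cast_sub i.is_le]

theorem strictAnti_rhoA : StrictAnti (rhoA r) := fun i j h => by
  simpa [rhoA] using h

theorem altA_ne_zero {v : Fin (r + 1) → ℚ} (hv : StrictAnti v) : altA r v ≠ 0 := fun h => by
  simpa [h] using coeff_altA_of_strictAnti hv hv

theorem IsCharA.schur_coord {f : CharRing (r + 1)} {l : Fin (r + 1) → ℕ}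
    (hl : l ∈ shiftedPartitions (r + 1) N) (hf : IsCharA r (gaps l) f) :
    schur l (coord (r + 1)) = mono (fun _ => (N / (r + 1) : ℚ)) * f := by
  refine mul_right_cancel₀ (altA_ne_zero strictAnti_rhoA) ?_
  rw [← alternant_staircase_coord, schur_mul_alternant_staircase,
    alternant_coord_eq_mono_mul_altA hl, ← hf, alternant_staircase_coord]
  ring

theorem IsCharA.schur_coord_pow {f : CharRing (r + 1)} {l : Fin (r + 1) → ℕ}
    (hl : l ∈ shiftedPartitions (r + 1) N) (hf : IsCharA r (gaps l) f) (n : ℕ) :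
    schur l (coord (r + 1) ^ n) = mono (fun _ => (N / (r + 1) : ℚ)) ^ n * pw n f := by
  rw [← adams_comp_coord, ← map_schur, hf.schur_coord hl, map_mul, adams_mono, mono_nsmul,
    adams_apply]

theorem exists_decomp_of_mono_mul {G : CharRing (r + 1)} {c : (Fin (r + 1) → ℕ) → ℕ}
    (h : mono (fun _ => (N / (r + 1) : ℚ)) * (G * altA r (rhoA r)) =
      ∑ l ∈ shiftedPartitions (r + 1) N, c l • alternant l (coord (r + 1))) :
    ∃ c', Decomp r G c' := by
  refine ⟨∑ l ∈ shiftedPartitions (r + 1) N, Finsupp.single (gaps l) (c l), ?_⟩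
  have isUnit_mono : IsUnit (mono fun _ : Fin (r + 1) => (N / (r + 1) : ℚ)) := by
    refine .of_mul_eq_one (mono (-fun _ => (N / (r + 1) : ℚ))) ?_
    rw [← mono_add, add_neg_cancel]
    rfl
  refine isUnit_mono.mul_left_cancel (h.trans ?_)
  rw [← Finsupp.sum_finsetSum_index (by simp) (by simp [add_smul]), mul_sum]
  refine sum_congr rfl fun l hl => ?_
  rw [Finsupp.sum_single_index (by simp), alternant_coord_eq_mono_mul_altA hl, mul_smul_comm,
    natCast_zsmul]

theorem exists_decomp_cubic {d : Fin r → ℕ} {f G : CharRing (r + 1)} (hf : IsCharA r d f)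
    {u : Equiv.Perm (Fin 3) → ℤ} (hu : IsCharacter fun τ => (u τ : ℚ))
    (hG : (6 : ℤ) • G = u 1 • f ^ 3 + (3 * u (Equiv.swap 0 1)) • (f * pw 2 f) +
      (2 * u (finRotate 3)) • pw 3 f) : ∃ c, Decomp r G c := by
  obtain ⟨N, l, hl, rfl⟩ := exists_gaps_eq d
  obtain ⟨c, hc⟩ := exists_cubic_plethysm_coord hl hu
  refine exists_decomp_of_mono_mul (N := 3 * N) (c := c) ?_
  have mono_cube : mono (fun _ : Fin (r + 1) => ((3 * N : ℕ) / (r + 1) : ℚ)) =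
      mono (fun _ => (N / (r + 1) : ℚ)) ^ 3 := by
    rw [← mono_nsmul]
    congr 1
    ext i
    simp [mul_div_assoc]
  refine smul_right_injective _ (by decide : (6 : ℤ) ≠ 0) ?_
  simp only [ofNat_zsmul] at hG ⊢
  rw [← hc, hf.schur_coord hl, hf.schur_coord_pow hl, hf.schur_coord_pow hl,
    alternant_staircase_coord, mono_cube, ← mul_smul_comm, ← smul_mul_assoc, hG]
  simp only [zsmul_eq_mul]
  ring

theorem coe_eq_coeff_of_decomp {F : CharRing (r + 1)} {c : (Fin r → ℕ) →₀ ℕ} (h : Decomp r F c)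
    (μ : Fin r → ℕ) : (c μ : ℤ) = (F * altA r (rhoA r)).coeff (slWt r μ + rhoA r) := by
  rw [h, Finsupp.sum, AddMonoidAlgebra.coeff_sum, Finsupp.finsetSum_apply]
  simp only [AddMonoidAlgebra.coeff_smul, Finsupp.smul_apply,
    coeff_altA_of_strictAnti (strictAnti_slWt_add_rhoA _) (strictAnti_slWt_add_rhoA _),
    add_left_inj, slWt_injective.eq_iff]
  simp

theorem isCharacter_sign {α : Type*} [Fintype α] [DecidableEq α] :
    IsCharacter fun τ : Equiv.Perm α => ((τ.sign : ℤ) : ℚ) :=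
  isCharacter_monoidHom (((Int.castRingHom ℚ).toMonoidHom.comp (Units.coeHom ℤ)).comp
    Equiv.Perm.sign)

theorem exists_decomp_exteriorCube {d : Fin r → ℕ} {f g : CharRing (r + 1)} (hf : IsCharA r d f)
    (hg : (6 : ℤ) • g = f ^ 3 - 3 • (f * pw 2 f) + 2 • pw 3 f) : ∃ c, Decomp r g c := by
  refine exists_decomp_cubic hf isCharacter_sign ?_
  have sign_finRotate : (finRotate 3).sign = 1 := by decide
  simp only [hg, sign_finRotate, Equiv.Perm.sign_one, Equiv.Perm.sign_swap (zero_ne_one' (Fin 3)),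
    zsmul_eq_mul, nsmul_eq_mul]
  push_cast
  ring

theorem exists_decomp_exteriorSquare_mul {d : Fin r → ℕ} {f h : CharRing (r + 1)}
    (hf : IsCharA r d f) (hh : (2 : ℤ) • h = f ^ 2 - pw 2 f) : ∃ c, Decomp r (h * f) c := by
  let u (τ : Equiv.Perm (Fin 3)) : ℤ := τ.sign * #{i | τ i = i}
  have isCharacter_u : IsCharacter fun τ => (u τ : ℚ) := by
    simpa [u, Pi.mul_def] using
      (isCharacter_sign (α := Fin 3)).mul (isCharacter_card_fixed (MonoidHom.id _))
  refine exists_decomp_cubic hf isCharacter_u ?_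
  have u_one : u 1 = 3 := by decide
  have u_swap : u (Equiv.swap 0 1) = -1 := by decide
  have u_finRotate : u (finRotate 3) = 0 := by decide
  rw [u_one, u_swap, u_finRotate]
  linear_combination (exp := 1) (3 * f) * hh

end Transfer

section RootCone

variable {m : ℕ}

/-- The simple root `α_{j+1}` (the index `j` is 0-based) of type `A_m`. -/
def simpleRoot (j : Fin m) : Fin (m + 1) → ℚ := Pi.single j.castSucc 1 - Pi.single j.succ 1

/-- The sum of the coordinates of a weight up to `i`; on the root lattice, the coefficient of the
`i`-th simple root. -/
def partialSum (i : Fin (m + 1)) : (Fin (m + 1) → ℚ) →+ ℚ where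
  toFun u := ∑ x ∈ Iic i, u x
  map_zero' := by simp
  map_add' u v := sum_add_distrib

theorem partialSum_apply (i : Fin (m + 1)) (u : Fin (m + 1) → ℚ) :
    partialSum i u = ∑ x ∈ Iic i, u x := rfl

theorem partialSum_last (u : Fin (m + 1) → ℚ) : partialSum (Fin.last m) u = ∑ x, u x := by
  rw [partialSum_apply, ← Fin.top_eq_last, Iic_top]

theorem partialSum_simpleRoot (i : Fin (m + 1)) (j : Fin m) :
    partialSum i (simpleRoot j) = if i = j.castSucc then 1 else 0 := by
  simp only [partialSum_apply, simpleRoot, Pi.sub_apply, sum_sub_distrib, sum_pi_single', mem_Iic,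
    Fin.le_def, Fin.ext_iff, Fin.val_castSucc, Fin.val_succ]
  split_ifs <;> first | omega | norm_num

theorem eq_of_partialSum_eq {u v : Fin (m + 1) → ℚ} (h : ∀ i, partialSum i u = partialSum i v) :
    u = v := by
  have Iic_succ (i : Fin m) : Iic i.succ = insert i.succ (Iic i.castSucc) := by
    ext x
    simp only [mem_Iic, mem_insert, Fin.le_def, Fin.ext_iff, Fin.val_castSucc, Fin.val_succ]
    omega
  ext i
  cases i using Fin.cases with
  | zero => simpa [partialSum_apply, ← bot_eq_zero] using h 0
  | succ i =>
    have h_succ := h i.succ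
    have h_castSucc := h i.castSucc
    rw [partialSum_apply, partialSum_apply, Iic_succ, sum_insert (by simp),
      sum_insert (by simp)] at h_succ
    rw [partialSum_apply, partialSum_apply] at h_castSucc
    linarith

/-- The natural number combinations of the simple roots, described by their coefficients. -/
def rootCone (m : ℕ) : AddSubmonoid (Fin (m + 1) → ℚ) where
  carrier := {u | partialSum (Fin.last m) u = 0 ∧ ∀ i, ∃ n : ℕ, partialSum i u = n}
  zero_mem' := by simpa using ⟨0, Nat.cast_zero.symm⟩
  add_mem' := by
    rintro u v ⟨u_last, hu⟩ ⟨v_last, hv⟩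
    refine ⟨by rw [map_add, u_last, v_last, add_zero], fun i => ?_⟩
    obtain ⟨a, ha⟩ := hu i
    obtain ⟨b, hb⟩ := hv i
    exact ⟨a + b, by rw [map_add, ha, hb, Nat.cast_add]⟩

theorem eq_zero_of_mem_rootCone {u : Fin (m + 1) → ℚ} (hu : u ∈ rootCone m)
    (sum_nonpos : ∑ i, partialSum i u ≤ 0) : u = 0 := by
  have nonneg (i) : 0 ≤ partialSum i u := by
    obtain ⟨n, hn⟩ := hu.2 i
    exact hn ▸ n.cast_nonneg
  have sum_eq : ∑ i, partialSum i u = 0 := sum_nonpos.antisymm (sum_nonneg fun i _ => nonneg i)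
  refine eq_of_partialSum_eq fun i => ?_
  rw [map_zero, (sum_eq_zero_iff_of_nonneg fun i _ => nonneg i).mp sum_eq i (mem_univ i)]

/-- `rootSum j j' (p, q)` is the combination `p α_j + q α_{j'}` of two simple roots. -/
def rootSum (j j' : Fin m) : ℕ × ℕ →+ (Fin (m + 1) → ℚ) :=
  (multiplesHom _ (simpleRoot j)).coprod (multiplesHom _ (simpleRoot j'))

theorem rootSum_apply (j j' : Fin m) (z : ℕ × ℕ) :
    rootSum j j' z = z.1 • simpleRoot j + z.2 • simpleRoot j' := rfl

theorem partialSum_rootSum (i : Fin (m + 1)) (j j' : Fin m) (z : ℕ × ℕ) :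
    partialSum i (rootSum j j' z) =
      (if i = j.castSucc then (z.1 : ℚ) else 0) + if i = j'.castSucc then (z.2 : ℚ) else 0 := by
  simp only [rootSum_apply, map_add, map_nsmul, partialSum_simpleRoot, smul_ite, nsmul_one,
    smul_zero]

theorem rootSum_injective {j j' : Fin m} (hjj' : j ≠ j') :
    Function.Injective (rootSum j j') := fun z w h => by
  have fst := congrArg (partialSum j.castSucc) h
  have snd := congrArg (partialSum j'.castSucc) h
  simp only [partialSum_rootSum, Fin.castSucc_inj, if_true, if_neg hjj', if_neg hjj'.symm,
    add_zero, zero_add, Nat.cast_inj] at fst snd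
  exact Prod.ext fst snd

theorem exists_rootSum_eq_of_add_eq_rootSum {j j' : Fin m} (hjj' : j ≠ j')
    {u v : Fin (m + 1) → ℚ} (hu : u ∈ rootCone m) (hv : v ∈ rootCone m) {z : ℕ × ℕ}
    (h : u + v = rootSum j j' z) : ∃ w ≤ z, u = rootSum j j' w := by
  choose a ha using hu.2
  choose b hb using hv.2
  have add_eq (i) : a i + b i =
      (if i = j.castSucc then z.1 else 0) + if i = j'.castSucc then z.2 else 0 := by
    have := congrArg (partialSum i) h
    rw [map_add, ha, hb, partialSum_rootSum] at this
    exact_mod_cast this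
  refine ⟨(a j.castSucc, a j'.castSucc), ⟨?_, ?_⟩, eq_of_partialSum_eq fun i => ?_⟩
  · have := add_eq j.castSucc
    simp only [Fin.castSucc_inj, if_true, if_neg hjj'] at this
    dsimp only
    omega
  · have := add_eq j'.castSucc
    simp only [Fin.castSucc_inj, if_true, if_neg hjj'.symm] at this
    dsimp only
    omega
  · rw [ha, partialSum_rootSum]
    have := add_eq i
    split_ifs at this ⊢ with h₁ h₂ h₂
    · exact absurd (Fin.castSucc_injective _ (h₁.symm.trans h₂)) hjj'
    · simp [h₁]
    · simp [h₂]
    · simpa using And.left (by simpa using this)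

end RootCone

section WeightsBelow

variable {m : ℕ} {b c : Fin (m + 1) → ℚ} {F G : CharRing (m + 1)}

/-- Every weight of `F` is obtained from `b` by subtracting simple roots. -/
def WeightsBelow (b : Fin (m + 1) → ℚ) (F : CharRing (m + 1)) : Prop :=
  ∀ u, F.coeff u ≠ 0 → b - u ∈ rootCone m

theorem WeightsBelow.mul (hF : WeightsBelow b F) (hG : WeightsBelow c G) :
    WeightsBelow (b + c) (F * G) := fun u hu => by
  classical
  obtain ⟨v, hv, w, hw, rfl⟩ := mem_add.mp
    (AddMonoidAlgebra.support_coeff_mul_subset F G (Finsupp.mem_support_iff.mpr hu))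
  rw [add_sub_add_comm]
  exact add_mem (hF v (Finsupp.mem_support_iff.mp hv)) (hG w (Finsupp.mem_support_iff.mp hw))

theorem exists_smul_eq_of_coeff_pw_ne_zero {n : ℕ} {u : Fin (m + 1) → ℚ}
    (hu : (pw n F).coeff u ≠ 0) : ∃ v, F.coeff v ≠ 0 ∧ n • v = u := by
  classical
  obtain ⟨v, hv, rfl⟩ := mem_image.mp
    (Finsupp.mapDomain_support (Finsupp.mem_support_iff.mpr hu))
  exact ⟨v, Finsupp.mem_support_iff.mp hv, (Nat.cast_smul_eq_nsmul ℚ n v).symm⟩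

theorem WeightsBelow.pw (hF : WeightsBelow b F) (n : ℕ) : WeightsBelow (n • b) (pw n F) :=
  fun u hu => by
    obtain ⟨v, hv, rfl⟩ := exists_smul_eq_of_coeff_pw_ne_zero hu
    rw [← nsmul_sub]
    exact nsmul_mem (hF v hv) n

theorem coeff_pw_nsmul {n : ℕ} (hn : n ≠ 0) (v : Fin (m + 1) → ℚ) :
    (pw n F).coeff (n • v) = F.coeff v := by
  rw [← Nat.cast_smul_eq_nsmul ℚ]
  exact Finsupp.mapDomain_apply (smul_right_injective _ (Nat.cast_ne_zero.mpr hn)) _ _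

/-- The extremal weight of `F` outside the cone below `b` would survive in the product `F * G`. -/
theorem WeightsBelow.of_mul (hFG : WeightsBelow (b + c) (F * G)) (hG : WeightsBelow c G)
    (coeff_ne_zero : G.coeff c ≠ 0) : WeightsBelow b F := by
  classical
  by_contra not_below
  let height (u : Fin (m + 1) → ℚ) : ℚ := ∑ i, partialSum i u
  have nonempty : {u ∈ F.coeff.support | b - u ∉ rootCone m}.Nonempty := by
    simpa [WeightsBelow, Finset.Nonempty] using not_below
  obtain ⟨u, hu, u_max⟩ := exists_max_image _ height nonempty
  obtain ⟨u_mem, u_not_below⟩ := mem_filter.mp hu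
  have uniqueAdd : UniqueAdd F.coeff.support G.coeff.support u c := fun a d ha hd h => by
    have a_sub_mem : a - u ∈ rootCone m := by
      rw [← sub_eq_sub_iff_add_eq_add.mpr (h.trans (add_comm u c)) |>.symm]
      exact hG d (Finsupp.mem_support_iff.mp hd)
    have a_not_below : b - a ∉ rootCone m := fun ha' =>
      u_not_below (by simpa using add_mem ha' a_sub_mem)
    have height_le : ∑ i, partialSum i (a - u) ≤ 0 := by
      simpa [height] using u_max a (mem_filter.mpr ⟨ha, a_not_below⟩)
    have a_eq : a = u := sub_eq_zero.mp (eq_zero_of_mem_rootCone a_sub_mem height_le)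
    exact ⟨a_eq, add_left_cancel (a_eq ▸ h)⟩
  refine u_not_below ?_
  rw [← add_sub_add_right_eq_sub b u c]
  refine hFG _ ?_
  rw [AddMonoidAlgebra.coeff_mul_add_of_uniqueAdd uniqueAdd]
  exact mul_ne_zero (Finsupp.mem_support_iff.mp u_mem) coeff_ne_zero

theorem partialSum_comp_perm_le (i : Fin (m + 1)) {v : Fin (m + 1) → ℚ} (hv : Antitone v)
    (σ : Equiv.Perm (Fin (m + 1))) : partialSum i (v ∘ σ) ≤ partialSum i v := by
  let indicator (x : Fin (m + 1)) : ℚ := if x ≤ i then 1 else 0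
  have antitone_indicator : Antitone indicator := fun x y hxy => by
    dsimp only [indicator]
    split_ifs with hy hx
    exacts [le_rfl, absurd (hxy.trans hy) hx, zero_le_one, le_rfl]
  have eq_sum (u : Fin (m + 1) → ℚ) : partialSum i u = ∑ x, u x * indicator x := by
    simp [partialSum_apply, indicator, ← sum_filter, filter_ge_eq_Iic]
  rw [eq_sum, eq_sum]
  exact (hv.monovary antitone_indicator).sum_comp_perm_mul_le_sum_mul

theorem weightsBelow_altA {v : Fin (m + 1) → ℚ} (hv : Antitone v)
    (sub_eq_int : ∀ x y, ∃ n : ℤ, v x - v y = n) : WeightsBelow v (altA m v) := fun u hu => by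
  rw [coeff_altA] at hu
  obtain ⟨σ, -, hσ⟩ := exists_ne_zero_of_sum_ne_zero hu
  obtain rfl : v ∘ σ = u := of_not_not fun h => hσ (if_neg h)
  refine ⟨?_, fun i => ?_⟩
  · rw [map_sub, partialSum_last, partialSum_last, sub_eq_zero]
    exact (Equiv.sum_comp σ v).symm
  · choose n hn using fun x => sub_eq_int x (σ x)
    have eq_sum : partialSum i (v - v ∘ σ) = ((∑ x ∈ Iic i, n x : ℤ) : ℚ) := by
      rw [Int.cast_sum, partialSum_apply]
      exact sum_congr rfl fun x _ => hn x
    have nonneg : 0 ≤ partialSum i (v - v ∘ σ) := by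
      rw [map_sub]
      exact sub_nonneg.mpr (partialSum_comp_perm_le i hv σ)
    rw [eq_sum, Int.cast_nonneg_iff] at nonneg
    obtain ⟨k, hk⟩ := Int.eq_ofNat_of_zero_le nonneg
    exact ⟨k, by rw [eq_sum, hk, Int.cast_natCast]⟩

theorem weightsBelow_altA_slWt_add_rhoA (d : Fin m → ℕ) :
    WeightsBelow (slWt m d + rhoA m) (altA m (slWt m d + rhoA m)) := by
  refine weightsBelow_altA (strictAnti_slWt_add_rhoA d).antitone fun x y => ?_
  let n (x : Fin (m + 1)) : ℤ := ∑ j with (x : ℕ) ≤ ((j : Fin m) : ℕ), (d j : ℤ) - (x : ℕ)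
  refine ⟨n x - n y, ?_⟩
  simp only [n, Pi.add_apply, slWt, partLift, rhoA]
  push_cast
  ring

theorem slWt_zero : slWt m 0 = 0 := by
  ext i
  simp [slWt, partLift]

theorem weightsBelow_altA_rhoA : WeightsBelow (rhoA m) (altA m (rhoA m)) := by
  simpa [slWt_zero] using weightsBelow_altA_slWt_add_rhoA (m := m) 0

theorem IsCharA.mul_altA_rhoA {d : Fin m → ℕ} {f : CharRing (m + 1)} (hf : IsCharA m d f) :
    f * altA m (rhoA m) = altA m (slWt m d + rhoA m) := (mul_comm _ _).trans hf

theorem IsCharA.weightsBelow {d : Fin m → ℕ} {f : CharRing (m + 1)} (hf : IsCharA m d f) :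
    WeightsBelow (slWt m d) f := by
  refine .of_mul (c := rhoA m) ?_ weightsBelow_altA_rhoA ?_
  · rw [hf.mul_altA_rhoA]
    exact weightsBelow_altA_slWt_add_rhoA d
  · simp [coeff_altA_of_strictAnti strictAnti_rhoA strictAnti_rhoA]

end WeightsBelow

section LowerCoeff

variable {m : ℕ} {j j' : Fin m} {b c : Fin (m + 1) → ℚ} {F G : CharRing (m + 1)}

/-- The coefficient of `F` at `b - p α_j - q α_{j'}`, where `(p, q) = z`. -/
def lowerCoeff (j j' : Fin m) (b : Fin (m + 1) → ℚ) (F : CharRing (m + 1)) (z : ℕ × ℕ) : ℤ :=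
  F.coeff (b - rootSum j j' z)

theorem lowerCoeff_add (F G : CharRing (m + 1)) (z : ℕ × ℕ) :
    lowerCoeff j j' b (F + G) z = lowerCoeff j j' b F z + lowerCoeff j j' b G z := rfl

theorem lowerCoeff_sub (F G : CharRing (m + 1)) (z : ℕ × ℕ) :
    lowerCoeff j j' b (F - G) z = lowerCoeff j j' b F z - lowerCoeff j j' b G z := rfl

theorem lowerCoeff_nsmul (n : ℕ) (F : CharRing (m + 1)) (z : ℕ × ℕ) :
    lowerCoeff j j' b (n • F) z = n • lowerCoeff j j' b F z := rfl

theorem lowerCoeff_zsmul (n : ℤ) (F : CharRing (m + 1)) (z : ℕ × ℕ) :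
    lowerCoeff j j' b (n • F) z = n • lowerCoeff j j' b F z := rfl

theorem lowerCoeff_mul (hjj' : j ≠ j') (hF : WeightsBelow b F) (hG : WeightsBelow c G)
    (z : ℕ × ℕ) : lowerCoeff j j' (b + c) (F * G) z =
      ∑ w ∈ Iic z, lowerCoeff j j' b F w * lowerCoeff j j' c G (z - w) := by
  have complement {w : ℕ × ℕ} (hw : w ∈ Iic z) : -(b - rootSum j j' w) +
      (b + c - rootSum j j' z) = c - rootSum j j' (z - w) := by
    rw [eq_sub_of_add_eq ((map_add (rootSum j j') _ _).symm.trans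
      (congrArg _ (tsub_add_cancel_of_le (mem_Iic.mp hw))))]
    abel
  rw [lowerCoeff, AddMonoidAlgebra.coeff_mul_apply_left, Finsupp.sum]
  symm
  refine sum_bij_ne_zero (fun w _ _ => b - rootSum j j' w) ?_ ?_ ?_ ?_
  · exact fun w _ h => Finsupp.mem_support_iff.mpr (left_ne_zero_of_mul h)
  · exact fun w _ _ w' _ _ h => rootSum_injective hjj' (sub_right_injective h)
  · intro u _ h
    obtain ⟨w, hw, h_eq⟩ := exists_rootSum_eq_of_add_eq_rootSum hjj' (z := z)
      (hF u (left_ne_zero_of_mul h)) (hG _ (right_ne_zero_of_mul h)) (by abel)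
    obtain rfl : b - rootSum j j' w = u := by rw [← h_eq, sub_sub_cancel]
    refine ⟨w, mem_Iic.mpr hw, ?_, rfl⟩
    rwa [lowerCoeff, lowerCoeff, ← complement (mem_Iic.mpr hw)]
  · exact fun w hw _ => by rw [lowerCoeff, lowerCoeff, complement hw]

theorem lowerCoeff_pw_zero {n : ℕ} (hn : n ≠ 0) :
    lowerCoeff j j' (n • b) (pw n F) 0 = lowerCoeff j j' b F 0 := by
  simp only [lowerCoeff, map_zero, sub_zero, coeff_pw_nsmul hn]

theorem lowerCoeff_pw_of_not_dvd (hjj' : j ≠ j') (hF : WeightsBelow b F) {n : ℕ} {z : ℕ × ℕ}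
    (hz : ¬(n ∣ z.1 ∧ n ∣ z.2)) : lowerCoeff j j' (n • b) (pw n F) z = 0 := by
  by_contra h
  obtain ⟨v, hv, v_eq⟩ := exists_smul_eq_of_coeff_pw_ne_zero h
  choose a ha using (hF v hv).2
  have mul_eq (i) : (n * a i : ℚ) = partialSum i (rootSum j j' z) := by
    rw [← ha, ← nsmul_eq_mul, ← map_nsmul, nsmul_sub, v_eq, sub_sub_cancel]
  have fst := mul_eq j.castSucc
  have snd := mul_eq j'.castSucc
  simp only [partialSum_rootSum, Fin.castSucc_inj, if_true, if_neg hjj', if_neg hjj'.symm,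
    add_zero, zero_add] at fst snd
  exact hz ⟨⟨a j.castSucc, by exact_mod_cast fst.symm⟩, a j'.castSucc, by exact_mod_cast snd.symm⟩

end LowerCoeff

section AlternatingSum

open scoped Matrix

variable {m : ℕ} {j j' : Fin m} {v : Fin (m + 1) → ℚ}

theorem coeff_altA_comp_perm (hv : Function.Injective v) (σ : Equiv.Perm (Fin (m + 1))) :
    (altA m v).coeff (v ∘ σ) = σ.sign := by
  rw [coeff_altA]
  simp only [hv.comp_left.eq_iff, DFunLike.coe_fn_eq, sum_ite_eq', mem_univ, if_true]

theorem dotProduct_self_eq_of_coeff_altA_ne_zero {w : Fin (m + 1) → ℚ}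
    (h : (altA m v).coeff w ≠ 0) : w ⬝ᵥ w = v ⬝ᵥ v := by
  rw [coeff_altA] at h
  obtain ⟨σ, -, hσ⟩ := exists_ne_zero_of_sum_ne_zero h
  obtain rfl : v ∘ σ = w := of_not_not fun hne => hσ (if_neg hne)
  exact Equiv.sum_comp σ fun i => v i * v i

theorem dotProduct_simpleRoot (v : Fin (m + 1) → ℚ) (j : Fin m) :
    v ⬝ᵥ simpleRoot j = v j.castSucc - v j.succ := by
  simp [simpleRoot]

theorem simpleRoot_dotProduct_self (j : Fin m) : simpleRoot j ⬝ᵥ simpleRoot j = 2 := by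
  rw [dotProduct_simpleRoot]
  norm_num [simpleRoot, Fin.castSucc_lt_succ.ne, Fin.castSucc_lt_succ.ne']

theorem simpleRoot_dotProduct_next (hj : j.succ = j'.castSucc) :
    simpleRoot j ⬝ᵥ simpleRoot j' = -1 := by
  have castSucc_lt : j.castSucc < j'.castSucc := hj ▸ Fin.castSucc_lt_succ
  have castSucc_ne : j'.succ ≠ j.castSucc := (castSucc_lt.trans Fin.castSucc_lt_succ).ne'
  rw [dotProduct_simpleRoot]
  simp [simpleRoot, hj, castSucc_lt.ne', castSucc_ne, Fin.castSucc_lt_succ.ne']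

theorem sub_rootSum_dotProduct_self (hj : j.succ = j'.castSucc) (v : Fin (m + 1) → ℚ)
    (z : ℕ × ℕ) : (v - rootSum j j' z) ⬝ᵥ (v - rootSum j j' z) = v ⬝ᵥ v +
      2 * (z.1 ^ 2 + z.2 ^ 2 - z.1 * z.2 - z.1 * (v j.castSucc - v j.succ) -
        z.2 * (v j'.castSucc - v j'.succ)) := by
  simp only [rootSum_apply, sub_dotProduct, dotProduct_sub, add_dotProduct, dotProduct_add,
    smul_dotProduct, dotProduct_smul, dotProduct_comm _ v,
    dotProduct_comm (simpleRoot j') (simpleRoot j), simpleRoot_dotProduct_self,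
    simpleRoot_dotProduct_next hj, dotProduct_simpleRoot v]
  simp only [nsmul_eq_mul]
  ring

/-- The alternating sum is supported on the orbit of `v`, where the norm is constant. -/
theorem lowerCoeff_altA_eq_zero (hj : j.succ = j'.castSucc) {z : ℕ × ℕ}
    (hz : (z.1 ^ 2 + z.2 ^ 2 - z.1 * z.2 : ℚ) ≠
      z.1 * (v j.castSucc - v j.succ) + z.2 * (v j'.castSucc - v j'.succ)) :
    lowerCoeff j j' v (altA m v) z = 0 := by
  by_contra h
  have := dotProduct_self_eq_of_coeff_altA_ne_zero h
  rw [sub_rootSum_dotProduct_self hj] at this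
  exact hz (by linarith)

theorem comp_swap_castSucc_succ (v : Fin (m + 1) → ℚ) (j : Fin m) :
    v ∘ Equiv.swap j.castSucc j.succ = v - (v j.castSucc - v j.succ) • simpleRoot j := by
  ext i
  simp only [Function.comp_apply, Equiv.swap_apply_def, simpleRoot, Pi.sub_apply, Pi.smul_apply,
    Pi.single_apply, smul_eq_mul]
  have := (Fin.castSucc_lt_succ (i := j)).ne
  split_ifs <;> simp_all

end AlternatingSum

section LowWeights

variable {m : ℕ} {j j' : Fin m} {d : Fin m → ℕ} {f : CharRing (m + 1)}

theorem lowerCoeff_altA_of_comp_perm_eq {v : Fin (m + 1) → ℚ} (hv : Function.Injective v)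
    {σ : Equiv.Perm (Fin (m + 1))} {z : ℕ × ℕ} (h : v ∘ σ = v - rootSum j j' z) :
    lowerCoeff j j' v (altA m v) z = σ.sign := by
  rw [lowerCoeff, ← h, coeff_altA_comp_perm hv]

theorem lowerCoeff_altA_zero {v : Fin (m + 1) → ℚ} (hv : Function.Injective v) :
    lowerCoeff j j' v (altA m v) 0 = 1 := by
  rw [lowerCoeff, map_zero, sub_zero]
  simpa using coeff_altA_comp_perm hv 1

theorem lowerCoeff_altA_rhoA_one_zero : lowerCoeff j j' (rhoA m) (altA m (rhoA m)) (1, 0) = -1 := by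
  rw [lowerCoeff_altA_of_comp_perm_eq strictAnti_rhoA.injective
    (σ := Equiv.swap j.castSucc j.succ), Equiv.Perm.sign_swap Fin.castSucc_lt_succ.ne]
  · rfl
  · rw [comp_swap_castSucc_succ, rhoA_castSucc_sub_succ]
    simp [rootSum_apply]

theorem lowerCoeff_altA_rhoA_zero_one : lowerCoeff j j' (rhoA m) (altA m (rhoA m)) (0, 1) = -1 := by
  rw [lowerCoeff_altA_of_comp_perm_eq strictAnti_rhoA.injective
    (σ := Equiv.swap j'.castSucc j'.succ), Equiv.Perm.sign_swap Fin.castSucc_lt_succ.ne]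
  · rfl
  · rw [comp_swap_castSucc_succ, rhoA_castSucc_sub_succ]
    simp [rootSum_apply]

theorem lowerCoeff_altA_rhoA_one_two (hj : j.succ = j'.castSucc) :
    lowerCoeff j j' (rhoA m) (altA m (rhoA m)) (1, 2) = 1 := by
  rw [lowerCoeff_altA_of_comp_perm_eq strictAnti_rhoA.injective
    (σ := Equiv.swap j.castSucc j.succ * Equiv.swap j'.castSucc j'.succ), Equiv.Perm.sign_mul,
    Equiv.Perm.sign_swap Fin.castSucc_lt_succ.ne, Equiv.Perm.sign_swap Fin.castSucc_lt_succ.ne]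
  · rfl
  · have gap : (rhoA m ∘ Equiv.swap j.castSucc j.succ) j'.castSucc -
        (rhoA m ∘ Equiv.swap j.castSucc j.succ) j'.succ = 2 := by
      have castSucc_lt : j.castSucc < j'.castSucc := hj ▸ Fin.castSucc_lt_succ
      have := rhoA_castSucc_sub_succ j
      have := rhoA_castSucc_sub_succ j'
      rw [Function.comp_apply, Function.comp_apply, ← hj, Equiv.swap_apply_right,
        Equiv.swap_apply_of_ne_of_ne (castSucc_lt.trans Fin.castSucc_lt_succ).ne'
          (hj ▸ Fin.castSucc_lt_succ.ne')]
      rw [← hj] at this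
      linarith
    rw [Equiv.Perm.coe_mul, ← Function.comp_assoc, comp_swap_castSucc_succ _ j', gap,
      comp_swap_castSucc_succ, rhoA_castSucc_sub_succ]
    simp [rootSum_apply, sub_sub, two_smul]

theorem lowerCoeff_altA_slWt_add_rhoA (hj : j.succ = j'.castSucc) (ha : 1 ≤ d j) (hb : 2 ≤ d j')
    {z : ℕ × ℕ} (hz : z ≤ (1, 2)) :
    lowerCoeff j j' (slWt m d + rhoA m) (altA m (slWt m d + rhoA m)) z =
      if z = 0 then 1 else 0 := by
  split_ifs with h
  · rw [h, lowerCoeff_altA_zero (strictAnti_slWt_add_rhoA d).injective]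
  · have gap (i : Fin m) : (slWt m d + rhoA m) i.castSucc - (slWt m d + rhoA m) i.succ =
        d i + 1 := by
      rw [Pi.add_apply, Pi.add_apply, add_sub_add_comm, slWt_castSucc_sub_succ,
        rhoA_castSucc_sub_succ]
    refine lowerCoeff_altA_eq_zero hj ?_
    rw [gap, gap]
    have ha' : (1 : ℚ) ≤ d j := by exact_mod_cast ha
    have hb' : (2 : ℚ) ≤ d j' := by exact_mod_cast hb
    obtain ⟨p, q⟩ := z
    obtain ⟨hp, hq⟩ : p ≤ 1 ∧ q ≤ 2 := hz
    refine ne_of_lt ?_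
    interval_cases p <;> interval_cases q <;> first | exact absurd rfl h | (push_cast; linarith)

theorem sum_Iic_prod {M : Type*} [AddCommMonoid M] (p q : ℕ) (φ : ℕ × ℕ → M) :
    ∑ w ∈ Iic (p, q), φ w = ∑ x ∈ range (p + 1), ∑ y ∈ range (q + 1), φ (x, y) := by
  rw [Nat.range_succ_eq_Iic, Nat.range_succ_eq_Iic, ← sum_product', Iic_product_Iic]

theorem ne_of_succ_eq_castSucc (hj : j.succ = j'.castSucc) : j ≠ j' := by
  rintro rfl
  exact Fin.castSucc_lt_succ.ne' hj

/-- The values are those of the Kostant partition function of type `A_2`. -/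
theorem IsCharA.lowerCoeff_eq (hf : IsCharA m d f) (hj : j.succ = j'.castSucc) (ha : 1 ≤ d j)
    (hb : 2 ≤ d j') {z : ℕ × ℕ} (hz : z ≤ (1, 2)) :
    lowerCoeff j j' (slWt m d) f z = min z.1 z.2 + 1 := by
  have hjj' := ne_of_succ_eq_castSucc hj
  have denominator_one_one : lowerCoeff j j' (rhoA m) (altA m (rhoA m)) (1, 1) = 0 :=
    lowerCoeff_altA_eq_zero hj (by norm_num [rhoA_castSucc_sub_succ])
  have denominator_zero_two : lowerCoeff j j' (rhoA m) (altA m (rhoA m)) (0, 2) = 0 :=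
    lowerCoeff_altA_eq_zero hj (by norm_num [rhoA_castSucc_sub_succ])
  have denominator_zero : lowerCoeff j j' (rhoA m) (altA m (rhoA m)) (0, 0) = 1 :=
    lowerCoeff_altA_zero strictAnti_rhoA.injective
  have convolution (p q : ℕ) (hpq : (p, q) ≤ (1, 2)) :=
    (lowerCoeff_mul hjj' hf.weightsBelow weightsBelow_altA_rhoA (p, q)).symm.trans
      ((congrArg (lowerCoeff j j' _ · _) hf.mul_altA_rhoA).trans
        (lowerCoeff_altA_slWt_add_rhoA hj ha hb hpq))
  simp only [sum_Iic_prod] at convolution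
  have zero_zero := convolution 0 0 (by decide)
  have zero_one := convolution 0 1 (by decide)
  have zero_two := convolution 0 2 (by decide)
  have one_zero := convolution 1 0 (by decide)
  have one_one := convolution 1 1 (by decide)
  have one_two := convolution 1 2 (by decide)
  simp only [sum_range_succ, range_zero, sum_empty, Prod.mk_sub_mk, tsub_zero, zero_tsub, tsub_self,
    Nat.add_one_sub_one, Nat.reduceAdd, Prod.mk_eq_zero, OfNat.ofNat_ne_zero, one_ne_zero, and_self,
    and_true, and_false, if_true, if_false, zero_add, denominator_zero, denominator_one_one,
    denominator_zero_two, lowerCoeff_altA_rhoA_one_zero, lowerCoeff_altA_rhoA_zero_one,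
    lowerCoeff_altA_rhoA_one_two hj]
    at zero_zero zero_one zero_two one_zero one_one one_two
  obtain ⟨p, q⟩ := z
  obtain ⟨hp, hq⟩ : p ≤ 1 ∧ q ≤ 2 := hz
  interval_cases p <;> interval_cases q <;> simp <;> linarith

theorem IsCharA.lowerCoeff_mul_mul_altA (hf : IsCharA m d f) (hj : j.succ = j'.castSucc)
    (ha : 1 ≤ d j) (hb : 2 ≤ d j') {b : Fin (m + 1) → ℚ} {F : CharRing (m + 1)}
    (hF : WeightsBelow b F) {z : ℕ × ℕ} (hz : z ≤ (1, 2)) :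
    lowerCoeff j j' (b + (slWt m d + rhoA m)) (F * (f * altA m (rhoA m))) z =
      lowerCoeff j j' b F z := by
  rw [hf.mul_altA_rhoA, lowerCoeff_mul (ne_of_succ_eq_castSucc hj) hF
    (weightsBelow_altA_slWt_add_rhoA d), sum_eq_single_of_mem z (mem_Iic.mpr le_rfl)]
  · rw [lowerCoeff_altA_slWt_add_rhoA hj ha hb (tsub_le_self.trans hz), if_pos (tsub_self z),
      mul_one]
  · intro w hw hne
    rw [lowerCoeff_altA_slWt_add_rhoA hj ha hb (tsub_le_self.trans hz),
      if_neg fun h => hne ((mem_Iic.mp hw).antisymm (tsub_eq_zero_iff_le.mp h)), mul_zero]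

theorem IsCharA.lowerCoeff_pow_three_mul_altA (hf : IsCharA m d f) (hj : j.succ = j'.castSucc)
    (ha : 1 ≤ d j) (hb : 2 ≤ d j') :
    lowerCoeff j j' (3 • slWt m d + rhoA m) (f ^ 3 * altA m (rhoA m)) (1, 2) = 10 := by
  have low {z : ℕ × ℕ} (hz : z ≤ (1, 2)) := hf.lowerCoeff_eq hj ha hb hz
  rw [show 3 • slWt m d + rhoA m = slWt m d + slWt m d + (slWt m d + rhoA m) by abel,
    pow_succ, mul_assoc, pow_two,
    hf.lowerCoeff_mul_mul_altA hj ha hb (hf.weightsBelow.mul hf.weightsBelow) le_rfl,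
    lowerCoeff_mul (ne_of_succ_eq_castSucc hj) hf.weightsBelow hf.weightsBelow,
    sum_congr rfl fun w hw => by rw [low (mem_Iic.mp hw), low tsub_le_self], sum_Iic_prod]
  rfl

theorem IsCharA.lowerCoeff_mul_pw_two_mul_altA (hf : IsCharA m d f) (hj : j.succ = j'.castSucc)
    (ha : 1 ≤ d j) (hb : 2 ≤ d j') :
    lowerCoeff j j' (3 • slWt m d + rhoA m) (f * pw 2 f * altA m (rhoA m)) (1, 2) = 0 := by
  rw [show 3 • slWt m d + rhoA m = 2 • slWt m d + (slWt m d + rhoA m) by abel,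
    mul_comm f, mul_assoc, hf.lowerCoeff_mul_mul_altA hj ha hb (hf.weightsBelow.pw 2) le_rfl,
    lowerCoeff_pw_of_not_dvd (ne_of_succ_eq_castSucc hj) hf.weightsBelow (by decide)]

theorem IsCharA.lowerCoeff_pw_three_mul_altA (hf : IsCharA m d f) (hj : j.succ = j'.castSucc)
    (ha : 1 ≤ d j) (hb : 2 ≤ d j') :
    lowerCoeff j j' (3 • slWt m d + rhoA m) (pw 3 f * altA m (rhoA m)) (1, 2) = 1 := by
  have hjj' := ne_of_succ_eq_castSucc hj
  rw [lowerCoeff_mul hjj' (hf.weightsBelow.pw 3) weightsBelow_altA_rhoA,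
    sum_eq_single_of_mem 0 (mem_Iic.mpr zero_le), lowerCoeff_pw_zero three_ne_zero,
    hf.lowerCoeff_eq hj ha hb zero_le, tsub_zero, lowerCoeff_altA_rhoA_one_two hj]
  · rfl
  · rintro ⟨p, q⟩ hz hne
    obtain ⟨hp, hq⟩ : p ≤ 1 ∧ q ≤ 2 := mem_Iic.mp hz
    rw [lowerCoeff_pw_of_not_dvd hjj' hf.weightsBelow, zero_mul]
    rintro ⟨dvd_p, dvd_q⟩
    exact hne (Prod.ext (Nat.eq_zero_of_dvd_of_lt dvd_p (by omega))
      (Nat.eq_zero_of_dvd_of_lt dvd_q (by omega)))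

end LowWeights

section Multiplicities

variable {m : ℕ} {j j' : Fin m} {ν : Fin m → ℕ} {f g h : CharRing (m + 1)}
  {c : (Fin m → ℕ) →₀ ℕ}

/-- The weight `3ν - α_j - 2α_{j+1}` in fundamental coordinates, where `j' = j + 1`. The coordinate
at `j'` is a truncated subtraction, which is the intended one for `1 ≤ ν j'`. -/
def tripleSubRoots (ν : Fin m → ℕ) (j j' : Fin m) : Fin m → ℕ := fun k =>
  if k = j' then 3 * ν k - 3
  else 3 * ν k + (if (k : ℕ) + 1 = (j : ℕ) then 1 else 0)
    + (if (k : ℕ) = (j : ℕ) + 2 then 2 else 0)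

theorem simpleRoot_castSucc_sub_succ (j k : Fin m) :
    simpleRoot j k.castSucc - simpleRoot j k.succ = (if (k : ℕ) = j then 2 else 0) -
      (if (k : ℕ) = j + 1 then 1 else 0) - (if (k : ℕ) + 1 = j then 1 else 0) := by
  simp only [simpleRoot, Pi.sub_apply, Pi.single_apply, Fin.ext_iff, Fin.val_succ,
    Fin.val_castSucc]
  split_ifs <;> first | omega | norm_num

theorem sum_simpleRoot (j : Fin m) : ∑ i, simpleRoot j i = 0 := by
  simp [simpleRoot]

theorem slWt_tripleSubRoots (hj : (j' : ℕ) = j + 1) (hb : 1 ≤ ν j') :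
    slWt m (tripleSubRoots ν j j') = 3 • slWt m ν - rootSum j j' (1, 2) := by
  refine eq_of_sub_succ_eq_of_sum_eq (fun k => ?_) ?_
  · have coordinate : (tripleSubRoots ν j j' k : ℚ) = 3 * ν k -
        (simpleRoot j k.castSucc - simpleRoot j k.succ) -
        2 * (simpleRoot j' k.castSucc - simpleRoot j' k.succ) := by
      rw [simpleRoot_castSucc_sub_succ, simpleRoot_castSucc_sub_succ, hj, tripleSubRoots]
      obtain rfl | hk := eq_or_ne k j'
      · rw [if_pos rfl, Nat.cast_sub (by omega), if_neg (by omega), if_pos hj, if_neg (by omega),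
          if_pos hj, if_neg (by omega), if_neg (by omega)]
        push_cast
        ring
      · have : (k : ℕ) ≠ j + 1 := hj ▸ Fin.val_ne_of_ne hk
        rw [if_neg hk]
        push_cast
        split_ifs <;> first | omega | norm_num
    rw [slWt_castSucc_sub_succ, coordinate, ← slWt_castSucc_sub_succ]
    simp only [rootSum_apply, Pi.sub_apply, Pi.add_apply, Pi.smul_apply, one_smul]
    simp only [nsmul_eq_mul, Nat.cast_ofNat]
    ring
  · simp only [rootSum_apply, Pi.sub_apply, Pi.add_apply, Pi.smul_apply, sum_sub_distrib,
      sum_add_distrib, ← smul_sum, sum_slWt, sum_simpleRoot, smul_zero, add_zero, sub_zero]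

theorem add_sum_le_sum_tripleSubRoots_add (hjj' : j ≠ j') :
    (∑ k, ν k) + 2 * ν j + 2 * ν j' ≤ (∑ k, tripleSubRoots ν j j' k) + 3 := by
  have pair_le : ν j + ν j' ≤ ∑ k, ν k := by
    rw [← sum_pair hjj']
    exact sum_le_sum_of_subset (subset_univ _)
  have triple_le : 3 * ∑ k, ν k ≤ (∑ k, tripleSubRoots ν j j' k) + 3 := calc
    3 * ∑ k, ν k = ∑ k, 3 * ν k := mul_sum ..
    _ ≤ ∑ k, (tripleSubRoots ν j j' k + if k = j' then 3 else 0) := by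
      refine sum_le_sum fun k _ => ?_
      rw [tripleSubRoots]
      split_ifs <;> omega
    _ = (∑ k, tripleSubRoots ν j j' k) + 3 := by
      rw [sum_add_distrib, sum_ite_eq' univ j', if_pos (mem_univ _)]
  omega

theorem coe_eq_lowerCoeff_of_decomp (hj : (j' : ℕ) = j + 1) (hb : 1 ≤ ν j')
    {F : CharRing (m + 1)} (hF : Decomp m F c) : (c (tripleSubRoots ν j j') : ℤ) =
      lowerCoeff j j' (3 • slWt m ν + rhoA m) (F * altA m (rhoA m)) (1, 2) := by
  rw [coe_eq_coeff_of_decomp hF, slWt_tripleSubRoots hj hb, lowerCoeff, add_sub_right_comm]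

theorem eq_two_of_decomp_exteriorCube (hf : IsCharA m ν f)
    (hg : (6 : ℤ) • g = f ^ 3 - 3 • (f * pw 2 f) + 2 • pw 3 f) (hj : (j' : ℕ) = j + 1)
    (ha : 1 ≤ ν j) (hb : 2 ≤ ν j') (hc : Decomp m g c) : c (tripleSubRoots ν j j') = 2 := by
  have hj' : j.succ = j'.castSucc := Fin.ext hj.symm
  have six_mul := congrArg
    (fun F => lowerCoeff j j' (3 • slWt m ν + rhoA m) (F * altA m (rhoA m)) (1, 2)) hg
  simp only [add_mul, sub_mul, smul_mul_assoc, lowerCoeff_add, lowerCoeff_sub, lowerCoeff_nsmul,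
    lowerCoeff_zsmul, ← coe_eq_lowerCoeff_of_decomp hj (one_le_two.trans hb) hc,
    hf.lowerCoeff_pow_three_mul_altA hj' ha hb, hf.lowerCoeff_mul_pw_two_mul_altA hj' ha hb,
    hf.lowerCoeff_pw_three_mul_altA hj' ha hb] at six_mul
  simp only [smul_eq_mul, nsmul_eq_mul] at six_mul
  omega

theorem eq_five_of_decomp_exteriorSquare_mul (hf : IsCharA m ν f)
    (hh : (2 : ℤ) • h = f ^ 2 - pw 2 f) (hj : (j' : ℕ) = j + 1)
    (ha : 1 ≤ ν j) (hb : 2 ≤ ν j') (hc : Decomp m (h * f) c) : c (tripleSubRoots ν j j') = 5 := by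
  have hj' : j.succ = j'.castSucc := Fin.ext hj.symm
  have two_smul_mul : (2 : ℤ) • (h * f) = f ^ 3 - f * pw 2 f := by
    rw [← smul_mul_assoc, hh]
    ring
  have two_mul := congrArg
    (fun F => lowerCoeff j j' (3 • slWt m ν + rhoA m) (F * altA m (rhoA m)) (1, 2)) two_smul_mul
  simp only [sub_mul, smul_mul_assoc, lowerCoeff_sub, lowerCoeff_zsmul,
    ← coe_eq_lowerCoeff_of_decomp hj (one_le_two.trans hb) hc,
    hf.lowerCoeff_pow_three_mul_altA hj' ha hb, hf.lowerCoeff_mul_pw_two_mul_altA hj' ha hb,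
    smul_eq_mul] at two_mul
  omega

end Multiplicities

end MFPaper

/-- **Lemma 4.5.**  Let `X = A_m` with `m ≥ 2` and let `ν = (…, a, b, …)` be a dominant
weight for `X` whose `j`-th coefficient is `a ≥ 1` and whose `(j+1)`-st coefficient is
`b ≥ 2` (here `j, j'` are the corresponding 0-indexed positions, `j' = j + 1`).
Set `ε = 3ν - α_j - 2α_{j+1}` (so `ε` has `j`-th coefficient `3a` and `(j+1)`-st
coefficient `3b - 3`).  Then, where `g` is the character of `Λ³V_X(ν)` and `h` the
character of `Λ²V_X(ν)` (characterised by `6g = f³ - 3f·f^{[2]} + 2f^{[3]}` and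
`2h = f² - f^{[2]}` for `f` the character of `V_X(ν)`):
(i) `V_X(ε)` occurs with multiplicity at least `2` in `Λ³V_X(ν)`;
(ii) the multiplicity of `V_X(ε)` in `Λ²V_X(ν) ⊗ V_X(ν)` exceeds its multiplicity in
`Λ³V_X(ν)` by at least `2`;
(iii) `S(ε) ≥ S(ν) + 2a + 2b - 3`, where `S` is the sum of the coefficients. -/
theorem thm_ext_cube_repeated
    (m : ℕ) (hm : 2 ≤ m) (ν : Fin m → ℕ) (j j' : Fin m)
    (hj : (j' : ℕ) = (j : ℕ) + 1) (ha : 1 ≤ ν j) (hb : 2 ≤ ν j') :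
    ∀ ε : Fin m → ℕ,
      ε = (fun k => if k = j' then 3 * ν k - 3
            else 3 * ν k + (if (k : ℕ) + 1 = (j : ℕ) then 1 else 0)
              + (if (k : ℕ) = (j : ℕ) + 2 then 2 else 0)) →
    ∀ f, IsCharA m ν f →
    ∀ g h : CharRing (m + 1),
      (6 : ℤ) • g = f ^ 3 - 3 • (f * pw 2 f) + 2 • pw 3 f →
      (2 : ℤ) • h = f ^ 2 - pw 2 f →
      (∃ c : (Fin m → ℕ) →₀ ℕ, Decomp m g c ∧ 2 ≤ c ε) ∧
      (∃ c₁ c₂ : (Fin m → ℕ) →₀ ℕ, Decomp m (h * f) c₁ ∧ Decomp m g c₂ ∧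
        c₂ ε + 2 ≤ c₁ ε) ∧
      ((∑ k, ν k) + 2 * ν j + 2 * ν j' ≤ (∑ k, ε k) + 3) := by
  intro ε hε f hf g h hg hh
  obtain rfl : ε = tripleSubRoots ν j j' := hε
  obtain ⟨c₁, hc₁⟩ := exists_decomp_exteriorSquare_mul hf hh
  obtain ⟨c₂, hc₂⟩ := exists_decomp_exteriorCube hf hg
  have mult_cube := eq_two_of_decomp_exteriorCube hf hg hj ha hb hc₂
  have mult_square_mul := eq_five_of_decomp_exteriorSquare_mul hf hh hj ha hb hc₁
  have hjj' : j ≠ j' := ne_of_succ_eq_castSucc (Fin.ext hj.symm)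
  exact ⟨⟨c₂, hc₂, mult_cube.ge⟩, ⟨c₁, c₂, hc₁, hc₂, by omega⟩,
    add_sum_le_sum_tripleSubRoots_add hjj'⟩
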